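/- Let τ = (τ, ℓ) be a decorated tree with ℓ(u) ≥ 2 for every vertex u of τ and |ℓ| > 1 + α. Then for every seed tree S of size k ≥ 2: E[F_τ(T_n^S)²] ≈ n^{2|ℓ|/(1+α)} as n → ∞. -/

import Mathlib

/-!
Write `γ = 1 / (1 + α)`, `L = |ℓ|`, and label the vertices by their order of arrival, so that after
`n` vertices have arrived a vertex with label `v` typically has degree of order `(n / (v + 1)) ^ γ`.
A copy of `τ` sitting at labels `φ u` then contributes about `n ^ (γ L) ∏ (φ u + 1) ^ (-γ ℓ u)`.
The condition `γ L > 1` makes the sum of the last products over all copies of order `1`, so the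
observable has the order `n ^ (γ L)` of the contribution of one fixed copy.

*Reduction to finite sums.* The expectation of a nonnegative function under `paLaw` is the iterated
finite sum `ex` (`integral_paLaw`), which obeys the rules of an expectation (`ex_mono`, `ex_smul`,
`ex_sq`, ...). Estimates are needed only for graphs that the chain can reach, `Reach`; these have
total degree `2 n - 2`, and a vertex outside the seed has a single older neighbour
(`reach_parent_unique`).

*Upper bound* (`upper_bound`). The rising moments of a degree satisfy a linear recursion in time,
so `E[deg(v) ^ p]` is at most a constant times `(n / (v + 1)) ^ (γ p)`. Hence the normalised degrees
of all vertices, at all times, are dominated up to small losses `(v + 1) ^ ε` and `j ^ ε` by one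
random variable `K = ctrl ^ (1 / p)`, with `E[K ^ p]` bounded (`ctrl_expectation`, `ctrl_bounds`).
Given `K`, the estimate is deterministic: `copies_bound` shows that the sum over all copies of
`∏ (φ u + 1) ^ (-s u)` is at most `C K ^ M`. In a copy that leaves the seed, the vertex with the
largest label has only one older neighbour, hence plays the role of a leaf `u` of `τ`, attached to
some `p`. The `r`-th later neighbour `y` of `x = φ p` satisfies
`r ≤ K (y + 1) ^ (γ + ε) (x + 1) ^ (-γ)`, so that summing `(y + 1) ^ (-s u)` over these neighbours
costs a power of `K` and yields a factor `(x + 1) ^ (-γ s u / (γ + ε))`, as soon as `s u > γ + ε`.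
This is where `ℓ u ≥ 2` is used. The leaf is thus removed and nearly all of its exponent passes to
`p`; for the one-vertex tree the sum converges, because the total exponent is still larger than `1`
when `ε` is small.

*Lower bound* (`lower_bound`). Any decorated tree embeds, with large degrees, in some reachable
graph (`exists_reach_emb`, `exists_reach_degrees`). For a map `φ` with fixed labels, one attachment
step multiplies the expected contribution of `φ` by at least `1 + L / ((1 + α) n - 2)`
(`oneCopy_step`), and the product of these factors grows like `n ^ (γ L)` (`growth_step`).
The second moment is then bounded below by the square of the first.
-/

open MeasureTheory Filter Asymptotics

noncomputable section

namespace AffinePA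

instance (V : Type*) : MeasurableSpace (SimpleGraph V) := ⊤

/-- The degree of a vertex. -/
def degR {V : Type*} (G : SimpleGraph V) (v : V) : ℕ := Nat.card {w // G.Adj v w}

/-- The tree on `n+1` vertices obtained from `G` by attaching the new vertex to `u`. -/
def extendTree {n : ℕ} (G : SimpleGraph (Fin n)) (u : Fin n) : SimpleGraph (Fin (n + 1)) :=
  SimpleGraph.fromRel fun a b =>
    (∃ a' b' : Fin n, a = Fin.castSucc a' ∧ b = Fin.castSucc b' ∧ G.Adj a' b') ∨
      (a = Fin.castSucc u ∧ b = Fin.last n)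

/-- One step of the affine preferential attachment dynamics. -/
def stepMeasure (α : ℝ) {n : ℕ} (G : SimpleGraph (Fin n)) :
    Measure (SimpleGraph (Fin (n + 1))) :=
  ∑ u : Fin n,
    ENNReal.ofReal (((degR G u : ℝ) - 1 + α) / ((1 + α) * (n : ℝ) - 2)) •
      Measure.dirac (extendTree G u)

/-- The law of the α-PA tree with `m` added vertices, started from the seed `S`. -/
def paLaw (α : ℝ) {k : ℕ} (S : SimpleGraph (Fin k)) :
    (m : ℕ) → Measure (SimpleGraph (Fin (k + m)))
  | 0 => Measure.dirac S
  | m + 1 => (paLaw α S m).bind (stepMeasure α)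

/-- The weight `∏_u [deg_T(f u) - 1]_{ℓ u}` of a map `f`. -/
def embWeight {V W : Type*} [Fintype V] (T : SimpleGraph W) (ℓ : V → ℕ) (f : V → W) : ℝ :=
  ∏ u : V, ((degR T (f u) - 1).descFactorial (ℓ u) : ℝ)

/-- The observable `F_{(τ,ℓ)}(T)`. -/
def obsG {V W : Type*} [Fintype V] (τ : SimpleGraph V) (ℓ : V → ℕ) (T : SimpleGraph W) : ℝ :=
  ∑ᶠ φ : τ ↪g T, embWeight T ℓ ⇑φ

/-- The weight `w(τ,ℓ)` of a decorated tree. -/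
def weightG {V : Type*} [Fintype V] (τ : SimpleGraph V) (ℓ : V → ℕ) : ℕ :=
  if Fintype.card V ≤ 2 ∧ ∀ v, ℓ v = 0 then 1
  else (∑ v, ℓ v) + Nat.card {v // degR τ v = 1 ∧ ℓ v = 0}

/-- A decorated tree: a finite graph on `Fin n` with nonnegative integer decorations. -/
structure DecTree where
  n : ℕ
  tree : SimpleGraph (Fin n)
  dec : Fin n → ℕ

def DecTree.wt (τ : DecTree) : ℕ := weightG τ.tree τ.dec

def DecTree.decSum (τ : DecTree) : ℕ := ∑ v, τ.dec v

def DecTree.obs (τ : DecTree) {W : Type*} (T : SimpleGraph W) : ℝ := obsG τ.tree τ.dec T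

/-- The strict partial order `≺` on decorated trees. -/
def DecLt (σ τ : DecTree) : Prop :=
  (σ.wt < τ.wt ∧ σ.n ≤ τ.n) ∨ (σ.wt = τ.wt ∧ σ.n < τ.n) ∨
    (σ.wt = τ.wt ∧ σ.n = τ.n ∧ σ.decSum < τ.decSum)

open Classical in
/-- `F_{τ+τ}(T)`: sum over pairs of embeddings with overlapping images. -/
def obsOverlapG {V W : Type*} [Fintype V] (τ : SimpleGraph V) (ℓ : V → ℕ)
    (T : SimpleGraph W) : ℝ :=
  ∑ᶠ (φ₁ : τ ↪g T) (φ₂ : τ ↪g T),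
    if (Set.range ⇑φ₁ ∩ Set.range ⇑φ₂).Nonempty then
      embWeight T ℓ ⇑φ₁ * embWeight T ℓ ⇑φ₂
    else 0

open Classical in
/-- `F_{τ,σ}(T)`: sum over pairs of embeddings with disjoint images. -/
def obsDisjG {V₁ V₂ W : Type*} [Fintype V₁] [Fintype V₂] (τ : SimpleGraph V₁) (ℓτ : V₁ → ℕ)
    (σ : SimpleGraph V₂) (ℓσ : V₂ → ℕ) (T : SimpleGraph W) : ℝ :=
  ∑ᶠ (φ₁ : τ ↪g T) (φ₂ : σ ↪g T),
    if Disjoint (Set.range ⇑φ₁) (Set.range ⇑φ₂) then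
      embWeight T ℓτ ⇑φ₁ * embWeight T ℓσ ⇑φ₂
    else 0

/-- `f ≈ g` : same order of magnitude, eventually. -/
def asympEquiv (f g : ℕ → ℝ) : Prop :=
  ∃ C : ℝ, 0 < C ∧ ∀ᶠ n in atTop, f n ≤ C * g n ∧ g n ≤ C * f n

/-- Descending factorial `[x]_l` of a real number. -/
def descPoch (x : ℝ) (l : ℕ) : ℝ := ∏ i ∈ Finset.range l, (x - (i : ℝ))

/-- Total variation distance between two measures. -/
def tvDist {X : Type*} [MeasurableSpace X] (μ ν : Measure X) : ℝ :=
  ⨆ s : {s : Set X // MeasurableSet s}, |(μ ↑s).toReal - (ν ↑s).toReal|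

open Classical in
/-- The contribution to `F_τ` of embeddings whose image meets the seed. -/
def obsMeetSeed (k m : ℕ) {r : ℕ} (τ : SimpleGraph (Fin r)) (ℓ : Fin r → ℕ)
    (T : SimpleGraph (Fin (k + m))) : ℝ :=
  ∑ᶠ φ : τ ↪g T,
    if ∃ (x : Fin r) (y : Fin k), φ x = Fin.castAdd m y then embWeight T ℓ ⇑φ else 0

/-- The contribution to `F_τ` of embeddings contained in the seed. -/
def obsInSeed (k m : ℕ) {r : ℕ} (τ : SimpleGraph (Fin r)) (ℓ : Fin r → ℕ)
    (S : SimpleGraph (Fin k)) (T : SimpleGraph (Fin (k + m))) : ℝ :=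
  ∑ᶠ φ : τ ↪g S, embWeight T ℓ fun u => Fin.castAdd m (φ u)

/-- `D_{τ,d}(T)`: the number of perfect embeddings of `(τ,d)` in `T`. -/
def perfCount {V W : Type*} (τ : SimpleGraph V) (d : V → ℕ) (T : SimpleGraph W) : ℕ :=
  Nat.card {φ : τ ↪g T // ∀ u, degR T (φ u) = d u}

/-- `τ` is `(T₁,T₂)`-blind. -/
def IsBlind {V W₁ W₂ : Type*} (τ : SimpleGraph V) (T₁ : SimpleGraph W₁)
    (T₂ : SimpleGraph W₂) : Prop :=
  ∀ d : V → ℕ, (∀ u, 1 ≤ d u) → perfCount τ d T₁ = perfCount τ d T₂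

/-- `D_{σ,τ,d}(T)`: perfect embeddings of `(τ,d)` meeting the seed exactly in `φ(A)`. -/
def perfCountSeed (k m : ℕ) {r : ℕ} (τ : SimpleGraph (Fin r)) (A : Finset (Fin r))
    (d : Fin r → ℕ) (T : SimpleGraph (Fin (k + m))) : ℕ :=
  Nat.card {φ : τ ↪g T //
    (∀ u, degR T (φ u) = d u) ∧ ∀ u : Fin r, (∃ y : Fin k, φ u = Fin.castAdd m y) ↔ u ∈ A}

/-- The σ-algebra generated by `T_0, …, T_m`. -/
def natFilt {Ω : Type*} [MeasurableSpace Ω] {k : ℕ}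
    (T : (m : ℕ) → Ω → SimpleGraph (Fin (k + m))) (m : ℕ) : MeasurableSpace Ω :=
  ⨆ j ∈ Set.Iic m, MeasurableSpace.comap (T j) inferInstance

/-- `(T_m)` is an α-PA chain started from the seed `S`, on the probability space `(Ω,P)`. -/
structure IsPAChain (α : ℝ) {k : ℕ} (S : SimpleGraph (Fin k)) {Ω : Type*} [MeasurableSpace Ω]
    (P : Measure Ω) (T : (m : ℕ) → Ω → SimpleGraph (Fin (k + m))) : Prop where
  isProb : IsProbabilityMeasure P
  meas : ∀ m, Measurable (T m)
  init : ∀ᵐ ω ∂P, T 0 ω = S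
  step : ∀ (m : ℕ) (f : SimpleGraph (Fin (k + (m + 1))) → ℝ),
    P[(fun ω => f (T (m + 1) ω))|natFilt T m] =ᵐ[P]
      fun ω => ∫ G, f G ∂stepMeasure α (T m ω)

/-- The natural filtration of the chain. -/
def natFiltration {Ω : Type*} [mΩ : MeasurableSpace Ω] {k : ℕ}
    (T : (m : ℕ) → Ω → SimpleGraph (Fin (k + m))) (hT : ∀ m, Measurable (T m)) :
    Filtration ℕ mΩ where
  seq := natFilt T
  mono' _ _ hij := biSup_mono fun _ hx => le_trans hx hij
  le' _ := iSup_le fun l => iSup_le fun _ => (hT l).comap_le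

/-- Isomorphism of simple graphs as a setoid. -/
def isoSetoid (n : ℕ) : Setoid (SimpleGraph (Fin n)) where
  r G H := Nonempty (G ≃g H)
  iseqv := ⟨fun G => ⟨RelIso.refl G.Adj⟩, fun ⟨e⟩ => ⟨e.symm⟩, fun ⟨e⟩ ⟨f⟩ => ⟨e.trans f⟩⟩

/-- Isomorphism classes of graphs on `n` vertices. -/
def IsoClass (n : ℕ) : Type := Quotient (isoSetoid n)

instance (n : ℕ) : MeasurableSpace (IsoClass n) := ⊤

/-- The law of the isomorphism class of the α-PA tree with `n` vertices grown from `S`. -/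
def isoClassLaw (α : ℝ) {k : ℕ} (S : SimpleGraph (Fin k)) (n : ℕ) : Measure (IsoClass n) :=
  if h : k ≤ n then
    (paLaw α S (n - k)).map fun G =>
      Quotient.mk (isoSetoid n) (G.map (finCongr (Nat.add_sub_cancel' h)).toEmbedding)
  else 0

/-- Adjacency of a graph on `Fin n`, read on natural-number labels (so that the same label can be
followed along the growing trees). -/
def adjN {n : ℕ} (G : SimpleGraph (Fin n)) (a b : ℕ) : Prop :=
  ∃ (ha : a < n) (hb : b < n), G.Adj ⟨a, ha⟩ ⟨b, hb⟩

open Classical in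
/-- The number of neighbours of `v` with label `< j`. In a tree grown by attachment this is the
degree that `v` had when the tree had `j` vertices. -/
def dgAt {n : ℕ} (G : SimpleGraph (Fin n)) (v j : ℕ) : ℕ :=
  ((Finset.range j).filter fun w => adjN G v w).card

lemma adjN_val {n : ℕ} (G : SimpleGraph (Fin n)) (a b : Fin n) : adjN G a b ↔ G.Adj a b :=
  ⟨fun ⟨_, _, h⟩ => h, fun h => ⟨a.2, b.2, h⟩⟩

lemma adjN.symm {n : ℕ} {G : SimpleGraph (Fin n)} {a b : ℕ} (h : adjN G a b) : adjN G b a := by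
  obtain ⟨ha, hb, h⟩ := h
  exact ⟨hb, ha, h.symm⟩

lemma degR_eq_dgAt {n : ℕ} (G : SimpleGraph (Fin n)) (v : Fin n) : degR G v = dgAt G v n := by
  classical
  unfold degR dgAt
  rw [Nat.card_eq_fintype_card, Fintype.card_subtype]
  refine Finset.card_bij (fun w _ => (w : ℕ)) ?_ ?_ ?_
  · intro w hw
    simp only [Finset.mem_filter, Finset.mem_univ, true_and] at hw
    simp only [Finset.mem_filter, Finset.mem_range, w.2, true_and]
    exact (adjN_val G v w).2 hw
  · intro a _ b _ h
    exact Fin.ext h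
  · intro b hb
    simp only [Finset.mem_filter, Finset.mem_range] at hb
    refine ⟨⟨b, hb.1⟩, ?_, rfl⟩
    simp only [Finset.mem_filter, Finset.mem_univ, true_and]
    exact (adjN_val G v ⟨b, hb.1⟩).1 hb.2

lemma adjN_ext {n : ℕ} (G : SimpleGraph (Fin n)) (u : Fin n) (a b : ℕ) :
    adjN (extendTree G u) a b ↔
      adjN G a b ∨ (a = u ∧ b = n) ∨ (a = n ∧ b = u) := by
  have hu := u.2
  constructor
  · rintro ⟨ha, hb, h⟩
    simp only [extendTree, SimpleGraph.fromRel_adj] at h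
    obtain ⟨hne, h⟩ := h
    rcases h with (⟨a', b', h1, h2, h3⟩ | ⟨h1, h2⟩) | (⟨a', b', h1, h2, h3⟩ | ⟨h1, h2⟩)
    · left
      rw [Fin.ext_iff] at h1 h2
      simp only [Fin.val_castSucc] at h1 h2
      subst h1 h2
      exact (adjN_val G a' b').2 h3
    · right; left
      rw [Fin.ext_iff] at h1 h2
      simpa using ⟨h1, h2⟩
    · left
      rw [Fin.ext_iff] at h1 h2
      simp only [Fin.val_castSucc] at h1 h2
      subst h1 h2
      exact (adjN_val G b' a').2 h3.symm
    · right; right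
      rw [Fin.ext_iff] at h1 h2
      simpa using ⟨h2, h1⟩
  · rintro (⟨ha, hb, h⟩ | ⟨rfl, rfl⟩ | ⟨rfl, rfl⟩)
    · refine ⟨by omega, by omega, ?_⟩
      simp only [extendTree, SimpleGraph.fromRel_adj]
      refine ⟨fun e => h.ne (by simpa [Fin.ext_iff] using e), Or.inl (Or.inl ?_)⟩
      exact ⟨⟨a, ha⟩, ⟨b, hb⟩, rfl, rfl, h⟩
    · refine ⟨by omega, by omega, ?_⟩
      simp only [extendTree, SimpleGraph.fromRel_adj]
      exact ⟨fun e => by simp [Fin.ext_iff] at e; omega, Or.inl (Or.inr ⟨rfl, rfl⟩)⟩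
    · refine ⟨by omega, by omega, ?_⟩
      simp only [extendTree, SimpleGraph.fromRel_adj]
      exact ⟨fun e => by simp [Fin.ext_iff] at e; omega, Or.inr (Or.inr ⟨rfl, rfl⟩)⟩

lemma dgAt_ext_of_le {n : ℕ} (G : SimpleGraph (Fin n)) (u : Fin n) {v j : ℕ} (hv : v < n)
    (hj : j ≤ n) : dgAt (extendTree G u) v j = dgAt G v j := by
  unfold dgAt
  congr 1
  ext w
  simp only [Finset.mem_filter, Finset.mem_range, adjN_ext]
  constructor
  · rintro ⟨h, h1 | h1 | h1⟩
    · exact ⟨h, h1⟩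
    · omega
    · omega
  · rintro ⟨h, h1⟩
    exact ⟨h, Or.inl h1⟩

lemma dgAt_ext_succ {n : ℕ} (G : SimpleGraph (Fin n)) (u : Fin n) {v : ℕ} (hv : v < n) :
    dgAt (extendTree G u) v (n + 1) = dgAt G v n + if v = u then 1 else 0 := by
  classical
  rw [← dgAt_ext_of_le G u hv le_rfl]
  unfold dgAt
  rw [Finset.range_add_one, Finset.filter_insert]
  have key : adjN (extendTree G u) v n ↔ v = u := by
    rw [adjN_ext]
    constructor
    · rintro (⟨_, h, _⟩ | h | h)
      · omega
      · exact h.1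
      · omega
    · intro h; simp [h]
  by_cases h : v = u
  · rw [if_pos (key.2 h), Finset.card_insert_of_notMem (by simp), if_pos h]
  · rw [if_neg (fun h' => h (key.1 h')), if_neg h, add_zero]

lemma dgAt_ext_last {n : ℕ} (G : SimpleGraph (Fin n)) (u : Fin n) :
    dgAt (extendTree G u) n (n + 1) = 1 := by
  classical
  unfold dgAt
  rw [Finset.card_eq_one]
  refine ⟨u, ?_⟩
  have hu := u.2
  ext w
  simp only [Finset.mem_filter, Finset.mem_range, adjN_ext, Finset.mem_singleton]
  constructor
  · rintro ⟨h, ⟨h1, _⟩ | h1 | h1⟩ <;> omega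
  · intro h
    exact ⟨by omega, Or.inr (Or.inr ⟨trivial, h⟩)⟩

open Classical in
lemma dgAt_eq_degree {n : ℕ} (G : SimpleGraph (Fin n)) (v : Fin n) : dgAt G v n = G.degree v := by
  rw [← degR_eq_dgAt, degR, Nat.card_eq_fintype_card, ← SimpleGraph.card_neighborSet_eq_degree]
  rfl

/-- The graphs reachable from the seed `S` after `m` attachment steps. -/
def Reach {k : ℕ} (S : SimpleGraph (Fin k)) : (m : ℕ) → SimpleGraph (Fin (k + m)) → Prop
  | 0 => fun G => G = S
  | m + 1 => fun G => ∃ G', Reach S m G' ∧ ∃ u, G = extendTree G' u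

lemma reach_degree_pos {k : ℕ} (hk : 2 ≤ k) {S : SimpleGraph (Fin k)} (hS : S.IsTree) (m : ℕ) :
    ∀ G, Reach S m G → ∀ v < k + m, 1 ≤ dgAt G v (k + m) := by
  induction m with
  | zero =>
    rintro G rfl v hv
    classical
    have : Nontrivial (Fin k) := Fin.nontrivial_iff_two_le.2 hk
    have h := hS.connected.preconnected.degree_pos_of_nontrivial ⟨v, hv⟩
    exact h.trans_eq (dgAt_eq_degree (n := k) G ⟨v, hv⟩).symm
  | succ m ih =>
    rintro G ⟨G', hG', u, rfl⟩ v hv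
    rcases Nat.lt_succ_iff_lt_or_eq.1 hv with h | h
    · have := ih G' hG' v h
      have := dgAt_ext_succ G' u h
      change 1 ≤ dgAt (extendTree G' u) v (k + m + 1)
      omega
    · subst h
      exact (dgAt_ext_last G' u).ge

lemma reach_degree_sum {k : ℕ} {S : SimpleGraph (Fin k)} (hS : S.IsTree) (m : ℕ) :
    ∀ G, Reach S m G → ∑ v : Fin (k + m), dgAt G v (k + m) + 2 = 2 * (k + m) := by
  induction m with
  | zero =>
    rintro G rfl
    classical
    have h := G.sum_degrees_eq_twice_card_edges
    have h1 := hS.card_edgeFinset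
    simp only [Fintype.card_fin] at h1
    change ∑ v : Fin k, dgAt (n := k) G v k + 2 = 2 * k
    rw [Finset.sum_congr rfl fun v _ => dgAt_eq_degree (n := k) G v]
    have h' : ∑ v : Fin k, SimpleGraph.degree (V := Fin k) G v = 2 * G.edgeFinset.card := h
    rw [h']
    omega
  | succ m ih =>
    rintro G ⟨G', hG', u, rfl⟩
    have := ih G' hG'
    change ∑ v : Fin (k + m + 1), dgAt (extendTree G' u) v (k + m + 1) + 2 = 2 * (k + m + 1)
    rw [Fin.sum_univ_castSucc]
    simp only [Fin.val_castSucc, Fin.val_last, dgAt_ext_last]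
    rw [Finset.sum_congr rfl fun v _ => dgAt_ext_succ G' u v.2, Finset.sum_add_distrib]
    simp only [← Fin.ext_iff, Finset.sum_ite_eq', Finset.mem_univ, if_true]
    omega

/-- A non-seed vertex has at most one neighbour with a smaller label. -/
lemma reach_parent_unique {k : ℕ} {S : SimpleGraph (Fin k)} (m : ℕ) :
    ∀ G, Reach S m G → ∀ v a b, k ≤ v → a < v → b < v → adjN G v a → adjN G v b → a = b := by
  induction m with
  | zero =>
    rintro G rfl v a b hv _ _ ⟨h, _⟩ _
    omega
  | succ m ih =>
    rintro G ⟨G', hG', u, rfl⟩ v a b hv ha hb h1 h2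
    have e1 := (adjN_ext G' u v a).1 h1
    have e2 := (adjN_ext G' u v b).1 h2
    rcases e1 with e1 | e1 | e1
    · rcases e2 with e2 | e2 | e2
      · exact ih G' hG' v a b hv ha hb e1 e2
      · omega
      · obtain ⟨hv', _⟩ := e1; omega
    · omega
    · rcases e2 with e2 | e2 | e2
      · obtain ⟨hv', _⟩ := e2; omega
      · omega
      · omega

/-! ### The expectation functional -/

/-- The probability of attaching the next vertex to `u` (truncated at `0`). -/
def wt (α : ℝ) {n : ℕ} (G : SimpleGraph (Fin n)) (u : Fin n) : ℝ :=
  max (((degR G u : ℝ) - 1 + α) / ((1 + α) * (n : ℝ) - 2)) 0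

/-- The expectation of `f` over the tree with `m` added vertices, as an iterated finite sum. -/
def ex (α : ℝ) {k : ℕ} (S : SimpleGraph (Fin k)) :
    (m : ℕ) → (SimpleGraph (Fin (k + m)) → ℝ) → ℝ
  | 0 => fun f => f S
  | m + 1 => fun f => ex α S m fun G => ∑ u, wt α G u * f (extendTree G u)

lemma lintegral_paLaw (α : ℝ) {k : ℕ} (S : SimpleGraph (Fin k)) (m : ℕ) :
    ∀ f : SimpleGraph (Fin (k + m)) → ℝ, (∀ G, 0 ≤ f G) →
      ∫⁻ G, ENNReal.ofReal (f G) ∂paLaw α S m = ENNReal.ofReal (ex α S m f) ∧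
        0 ≤ ex α S m f := by
  induction m with
  | zero =>
    intro f hf
    refine ⟨?_, hf S⟩
    change ∫⁻ G, ENNReal.ofReal (f G) ∂Measure.dirac S = _
    rw [lintegral_dirac' _ measurable_from_top]
    rfl
  | succ m ih =>
    intro f hf
    have hg : ∀ G : SimpleGraph (Fin (k + m)),
        0 ≤ ∑ u, wt α G u * f (extendTree G u) := fun G =>
      Finset.sum_nonneg fun u _ => mul_nonneg (le_max_right _ _) (hf _)
    obtain ⟨h1, h2⟩ := ih _ hg
    refine ⟨?_, h2⟩
    change ∫⁻ G, ENNReal.ofReal (f G) ∂((paLaw α S m).bind (stepMeasure α)) = _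
    rw [Measure.lintegral_bind (Measurable.aemeasurable measurable_from_top)
      (Measurable.aemeasurable measurable_from_top)]
    refine Eq.trans ?_ h1
    congr 1
    ext G
    unfold stepMeasure
    rw [lintegral_finsetSum_measure, ENNReal.ofReal_sum_of_nonneg
      (f := fun u => wt α G u * f (extendTree G u))
      (fun u _ => mul_nonneg (le_max_right _ _) (hf _))]
    refine Finset.sum_congr rfl fun u _ => ?_
    rw [lintegral_smul_measure, lintegral_dirac' _ measurable_from_top, wt,
      ENNReal.ofReal_mul (le_max_right _ _)]
    congr 1
    rw [ENNReal.ofReal_max]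
    simp

lemma integral_paLaw (α : ℝ) {k : ℕ} (S : SimpleGraph (Fin k)) (m : ℕ)
    (f : SimpleGraph (Fin (k + m)) → ℝ) (hf : ∀ G, 0 ≤ f G) :
    ∫ G, f G ∂paLaw α S m = ex α S m f := by
  obtain ⟨h1, h2⟩ := lintegral_paLaw α S m f hf
  rw [integral_eq_lintegral_of_nonneg_ae (Filter.Eventually.of_forall hf)
    (Measurable.aestronglyMeasurable measurable_from_top), h1, ENNReal.toReal_ofReal h2]

lemma ex_mono (α : ℝ) {k : ℕ} (S : SimpleGraph (Fin k)) (m : ℕ) :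
    ∀ f g : SimpleGraph (Fin (k + m)) → ℝ, (∀ G, Reach S m G → f G ≤ g G) →
      ex α S m f ≤ ex α S m g := by
  induction m with
  | zero => exact fun f g h => h S rfl
  | succ m ih =>
    intro f g h
    refine ih _ _ fun G hG => Finset.sum_le_sum fun u _ => ?_
    exact mul_le_mul_of_nonneg_left (h _ ⟨G, hG, u, rfl⟩) (le_max_right _ _)

lemma ex_congr (α : ℝ) {k : ℕ} (S : SimpleGraph (Fin k)) (m : ℕ)
    (f g : SimpleGraph (Fin (k + m)) → ℝ) (h : ∀ G, Reach S m G → f G = g G) :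
    ex α S m f = ex α S m g :=
  le_antisymm (ex_mono α S m f g fun G hG => (h G hG).le)
    (ex_mono α S m g f fun G hG => (h G hG).ge)

lemma ex_smul (α : ℝ) {k : ℕ} (S : SimpleGraph (Fin k)) (m : ℕ) (c : ℝ) :
    ∀ f : SimpleGraph (Fin (k + m)) → ℝ, ex α S m (fun G => c * f G) = c * ex α S m f := by
  induction m with
  | zero => exact fun f => rfl
  | succ m ih =>
    intro f
    simp only [ex]
    rw [← ih]
    congr 1
    ext G
    rw [Finset.mul_sum]
    exact Finset.sum_congr rfl fun u _ => by ring

lemma ex_add (α : ℝ) {k : ℕ} (S : SimpleGraph (Fin k)) (m : ℕ) :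
    ∀ f g : SimpleGraph (Fin (k + m)) → ℝ,
      ex α S m (fun G => f G + g G) = ex α S m f + ex α S m g := by
  induction m with
  | zero => exact fun f g => rfl
  | succ m ih =>
    intro f g
    simp only [ex]
    rw [← ih]
    congr 1
    ext G
    rw [← Finset.sum_add_distrib]
    exact Finset.sum_congr rfl fun u _ => by ring

lemma ex_sum (α : ℝ) {k : ℕ} (S : SimpleGraph (Fin k)) (m : ℕ) {ι : Type*} (s : Finset ι)
    (f : ι → SimpleGraph (Fin (k + m)) → ℝ) :
    ex α S m (fun G => ∑ i ∈ s, f i G) = ∑ i ∈ s, ex α S m (f i) := by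
  classical
  induction s using Finset.induction_on with
  | empty =>
    have := ex_smul α S m 0 (fun _ => 0)
    simpa using this
  | insert a s ha ih =>
    simp only [Finset.sum_insert ha]
    rw [ex_add, ih]

lemma ex_nonneg (α : ℝ) {k : ℕ} (S : SimpleGraph (Fin k)) (m : ℕ)
    (f : SimpleGraph (Fin (k + m)) → ℝ) (h : ∀ G, Reach S m G → 0 ≤ f G) : 0 ≤ ex α S m f := by
  have h1 := ex_mono α S m (fun _ => 0) f h
  have h2 := ex_smul α S m 0 f
  simp only [zero_mul] at h2
  rwa [h2] at h1

section Chain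

variable {α : ℝ} (hα : 0 < α) {k : ℕ} (hk : 2 ≤ k) {S : SimpleGraph (Fin k)} (hS : S.IsTree)

include hα hk in
lemma norm_pos (m : ℕ) : 0 < (1 + α) * ((k + m : ℕ) : ℝ) - 2 := by
  have : (2 : ℝ) ≤ ((k + m : ℕ) : ℝ) := by exact_mod_cast (by omega : 2 ≤ k + m)
  nlinarith

include hα hk hS in
lemma wt_eq {m : ℕ} {G : SimpleGraph (Fin (k + m))} (hG : Reach S m G) (u : Fin (k + m)) :
    wt α G u = ((dgAt G u (k + m) : ℝ) - 1 + α) / ((1 + α) * ((k + m : ℕ) : ℝ) - 2) := by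
  unfold wt
  rw [degR_eq_dgAt, max_eq_left]
  have h1 : (1 : ℝ) ≤ dgAt G u (k + m) := by
    exact_mod_cast reach_degree_pos hk hS m G hG u u.2
  exact div_nonneg (by linarith) (norm_pos hα hk m).le

include hα hk hS in
lemma wt_pos {m : ℕ} {G : SimpleGraph (Fin (k + m))} (hG : Reach S m G) (u : Fin (k + m)) :
    0 < wt α G u := by
  rw [wt_eq hα hk hS hG]
  have h1 : (1 : ℝ) ≤ dgAt G u (k + m) := by
    exact_mod_cast reach_degree_pos hk hS m G hG u u.2
  exact div_pos (by linarith) (norm_pos hα hk m)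

include hα hk hS in
lemma wt_sum {m : ℕ} {G : SimpleGraph (Fin (k + m))} (hG : Reach S m G) :
    ∑ u, wt α G u = 1 := by
  simp only [wt_eq hα hk hS hG]
  rw [← Finset.sum_div, div_eq_one_iff_eq (norm_pos hα hk m).ne']
  have h := reach_degree_sum hS m G hG
  have h' : (∑ v : Fin (k + m), (dgAt G v (k + m) : ℝ)) + 2 = 2 * ((k + m : ℕ) : ℝ) := by
    exact_mod_cast h
  rw [Finset.sum_add_distrib, Finset.sum_sub_distrib]
  simp only [Finset.sum_const, Finset.card_univ, Fintype.card_fin, nsmul_eq_mul]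
  linarith

include hα hk hS in
lemma ex_one (m : ℕ) : ex α S m (fun _ => 1) = 1 := by
  induction m with
  | zero => rfl
  | succ m ih =>
    simp only [ex, mul_one]
    rw [← ih]
    exact (ex_congr α S m _ _ fun G hG => (wt_sum hα hk hS hG)).trans ih |>.trans ih.symm

include hα hk hS in
lemma ex_sq (m : ℕ) (f : SimpleGraph (Fin (k + m)) → ℝ) :
    (ex α S m f) ^ 2 ≤ ex α S m (fun G => f G ^ 2) := by
  set c := ex α S m f with hc
  have h := ex_nonneg α S m (fun G => (f G ^ 2 + (-2 * c) * f G) + c ^ 2 * 1)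
    (fun G _ => by nlinarith [sq_nonneg (f G - c)])
  rw [ex_add, ex_add, ex_smul, ex_smul, ex_one hα hk hS, ← hc] at h
  nlinarith

include hα hk hS in
lemma ex_pos_of_reach (m : ℕ) : ∀ (f : SimpleGraph (Fin (k + m)) → ℝ),
    (∀ G, Reach S m G → 0 ≤ f G) → ∀ G, Reach S m G → 0 < f G → 0 < ex α S m f := by
  induction m with
  | zero => rintro f _ G rfl h; exact h
  | succ m ih =>
    rintro f hf G ⟨G', hG', u, rfl⟩ h
    refine ih _ (fun H hH => Finset.sum_nonneg fun v _ =>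
      mul_nonneg (le_max_right _ _) (hf _ ⟨H, hH, v, rfl⟩)) G' hG' ?_
    refine Finset.sum_pos' (fun v _ => mul_nonneg (le_max_right _ _) (hf _ ⟨G', hG', v, rfl⟩))
      ⟨u, Finset.mem_univ _, mul_pos (wt_pos hα hk hS hG' u) h⟩

end Chain

/-! ### Moments of the degrees -/

/-- The rising factorial `(x - 1 + α)(x + α) ⋯ (x - 1 + α + p - 1)`. Evaluated at the degree of a
fixed vertex it is an exact eigenfunction of the dynamics. -/
def rp (α : ℝ) (p : ℕ) (x : ℝ) : ℝ := ∏ i ∈ Finset.range p, (x - 1 + α + i)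

lemma rp_succ (α : ℝ) (p : ℕ) (x : ℝ) :
    (x - 1 + α) * rp α p (x + 1) = (x - 1 + α + p) * rp α p x := by
  unfold rp
  induction p with
  | zero => simp
  | succ p ih =>
    rw [Finset.prod_range_succ, Finset.prod_range_succ, ← mul_assoc, ih]
    push_cast
    ring

lemma rp_nonneg {α : ℝ} (hα : 0 < α) (p : ℕ) {x : ℝ} (hx : 1 ≤ x) : 0 ≤ rp α p x :=
  Finset.prod_nonneg fun i _ => by
    have : (0 : ℝ) ≤ i := i.cast_nonneg
    linarith

lemma pow_le_rp {α : ℝ} (hα : 0 < α) (p : ℕ) {x : ℝ} (hx : 1 ≤ x) :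
    (min 1 α) ^ p * x ^ p ≤ rp α p x := by
  unfold rp
  have h : (min 1 α) ^ p * x ^ p = ∏ i ∈ Finset.range p, (min 1 α * x) := by
    rw [Finset.prod_const, Finset.card_range, mul_pow]
  rw [h]
  have hm : 0 < min 1 α := lt_min one_pos hα
  refine Finset.prod_le_prod (fun i _ => by positivity) fun i _ => ?_
  have h1 : min 1 α * (x - 1) ≤ 1 * (x - 1) :=
    mul_le_mul_of_nonneg_right (min_le_left _ _) (by linarith)
  have h2 := min_le_right 1 α
  have h3 : (0 : ℝ) ≤ i := i.cast_nonneg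
  linarith

lemma reach_dgAt_pos {k : ℕ} (hk : 2 ≤ k) {S : SimpleGraph (Fin k)} (hS : S.IsTree) (m : ℕ) :
    ∀ G, Reach S m G → ∀ v j, k ≤ j → v < j → j ≤ k + m → 1 ≤ dgAt G v j := by
  induction m with
  | zero =>
    intro G hG v j hkj hv hj
    obtain rfl : j = k + 0 := by omega
    exact reach_degree_pos hk hS 0 G hG v hv
  | succ m ih =>
    intro G hG v j hkj hv hj
    rcases Nat.lt_or_ge (k + m) j with h | h
    · obtain rfl : j = k + (m + 1) := by omega
      exact reach_degree_pos hk hS (m + 1) G hG v hv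
    · obtain ⟨G', hG', u, rfl⟩ := hG
      rw [dgAt_ext_of_le G' u (by omega) h]
      exact ih G' hG' v j hkj hv h

section Moments

variable {α : ℝ} (hα : 0 < α) {k : ℕ} (hk : 2 ≤ k) {S : SimpleGraph (Fin k)} (hS : S.IsTree)

include hα hk hS in
lemma rp_step (p : ℕ) {m : ℕ} {G : SimpleGraph (Fin (k + m))} (hG : Reach S m G) {v : ℕ}
    (hv : v < k + m) :
    ∑ u, wt α G u * rp α p (dgAt (extendTree G u) v (k + m + 1)) =
      (1 + p / ((1 + α) * ((k + m : ℕ) : ℝ) - 2)) * rp α p (dgAt G v (k + m)) := by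
  set x : ℝ := (dgAt G v (k + m) : ℝ) with hx
  have h1 : ∀ u : Fin (k + m), wt α G u * rp α p (dgAt (extendTree G u) v (k + m + 1)) =
      wt α G u * rp α p x + if (⟨v, hv⟩ : Fin (k + m)) = u then
        wt α G u * (rp α p (x + 1) - rp α p x) else 0 := by
    intro u
    rw [dgAt_ext_succ G u hv]
    by_cases h : v = u
    · have h' : (⟨v, hv⟩ : Fin (k + m)) = u := Fin.ext h
      rw [if_pos h, if_pos h']
      push_cast
      ring
    · have h' : ¬ (⟨v, hv⟩ : Fin (k + m)) = u := fun e => h (by rw [← e])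
      rw [if_neg h, if_neg h']
      simp [hx]
  rw [Finset.sum_congr rfl fun u _ => h1 u, Finset.sum_add_distrib, ← Finset.sum_mul,
    wt_sum hα hk hS hG, Finset.sum_ite_eq, if_pos (Finset.mem_univ _), wt_eq hα hk hS hG]
  have hN := norm_pos hα hk m
  set N := (1 + α) * ((k + m : ℕ) : ℝ) - 2
  have h2 := rp_succ α p x
  change 1 * rp α p x + (x - 1 + α) / N * (rp α p (x + 1) - rp α p x) = _
  field_simp
  linarith

lemma bernoulli_step (hα : 0 < α) {p : ℕ} (hp : 1 + α ≤ p) {i : ℝ} (hi : 2 ≤ i) :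
    (1 + p / ((1 + α) * i - 2)) * (i - 2 / (1 + α)) ^ ((p : ℝ) / (1 + α)) ≤
      (i + 1 - 2 / (1 + α)) ^ ((p : ℝ) / (1 + α)) := by
  have h1 : 0 < 1 + α := by linarith
  have hx : 0 < i - 2 / (1 + α) := by
    rw [sub_pos, div_lt_iff₀ h1]; nlinarith
  have e : i + 1 - 2 / (1 + α) = (1 + (i - 2 / (1 + α))⁻¹) * (i - 2 / (1 + α)) := by
    rw [add_mul, inv_mul_cancel₀ hx.ne']; ring
  rw [e, Real.mul_rpow (by positivity) hx.le]
  refine mul_le_mul_of_nonneg_right ?_ (by positivity)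
  refine le_trans (le_of_eq ?_) (one_add_mul_self_le_rpow_one_add
    (by linarith [inv_pos.2 hx]) ((one_le_div h1).2 hp))
  have h3 : (1 + α) * i - 2 = (1 + α) * (i - 2 / (1 + α)) := by field_simp
  rw [h3]
  field_simp

include hα hk hS in
/-- The `p`-th rising moment of the degree of `v` at time `j` is at most a constant times
`(j / birth time of v) ^ (p / (1 + α))`, the birth time being `max (v + 1) k`. -/
lemma rp_moment {p : ℕ} (hp : 1 + α ≤ p) : ∃ C : ℝ, 0 ≤ C ∧ ∀ m v j, k ≤ j → v < j → j ≤ k + m →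
    ex α S m (fun G => rp α p (dgAt G v j)) *
      (((max (v + 1) k : ℕ) : ℝ) - 2 / (1 + α)) ^ ((p : ℝ) / (1 + α)) ≤
      C * ((j : ℝ) - 2 / (1 + α)) ^ ((p : ℝ) / (1 + α)) := by
  have hpos : ∀ v ∈ Finset.range k, 0 ≤ rp α p (dgAt S v k) := fun v hv =>
    rp_nonneg hα p (by
      exact_mod_cast reach_degree_pos hk hS 0 S rfl v (Finset.mem_range.1 hv))
  have h1 : 0 ≤ rp α p 1 := rp_nonneg hα p le_rfl
  have hsum := Finset.sum_nonneg hpos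
  have hbase : ∀ i : ℕ, 2 ≤ i → (0 : ℝ) ≤ (i : ℝ) - 2 / (1 + α) := by
    intro i hi
    have : (2 : ℝ) ≤ i := by exact_mod_cast hi
    rw [sub_nonneg, div_le_iff₀ (by linarith)]
    nlinarith
  refine ⟨∑ v ∈ Finset.range k, rp α p (dgAt S v k) + rp α p 1, by linarith, fun m => ?_⟩
  induction m with
  | zero =>
    intro v j hkj hv hj
    obtain rfl : j = k := by omega
    rw [max_eq_right (by omega : v + 1 ≤ j)]
    refine mul_le_mul_of_nonneg_right ?_ (Real.rpow_nonneg (hbase j hk) _)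
    have h2 := Finset.single_le_sum hpos (Finset.mem_range.2 hv)
    change rp α p (dgAt S v j) ≤ _
    linarith
  | succ m ih =>
    intro v j hkj hv hj
    rcases Nat.lt_or_ge (k + m) j with h | h
    · obtain rfl : j = k + m + 1 := by omega
      rcases Nat.lt_succ_iff_lt_or_eq.1 hv with h' | h'
      · have e : ex α S (m + 1) (fun G => rp α p (dgAt G v (k + m + 1))) =
            (1 + p / ((1 + α) * ((k + m : ℕ) : ℝ) - 2)) *
              ex α S m (fun G => rp α p (dgAt G v (k + m))) := by
          rw [← ex_smul]
          exact ex_congr α S m _ _ fun G hG => rp_step hα hk hS p hG h'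
        rw [e, mul_assoc]
        have hN := norm_pos hα hk m
        have i1 := ih v (k + m) (by omega) h' le_rfl
        have i2 := bernoulli_step hα hp (i := ((k + m : ℕ) : ℝ))
          (by exact_mod_cast (by omega : 2 ≤ k + m))
        refine (mul_le_mul_of_nonneg_left i1 (by positivity)).trans ?_
        rw [mul_left_comm]
        refine mul_le_mul_of_nonneg_left (i2.trans_eq ?_) (by linarith)
        push_cast
        rfl
      · subst h'
        rw [max_eq_left (by omega)]
        refine mul_le_mul_of_nonneg_right ?_ (Real.rpow_nonneg (hbase _ (by omega)) _)
        have e : ex α S (m + 1) (fun G => rp α p (dgAt G (k + m) (k + m + 1))) = rp α p 1 := by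
          refine (ex_congr α S m _ (fun _ => rp α p 1 * 1) fun G hG => ?_).trans ?_
          · change ∑ u, wt α G u * rp α p (dgAt (extendTree G u) (k + m) (k + m + 1)) = _
            simp only [dgAt_ext_last]
            rw [← Finset.sum_mul, wt_sum hα hk hS hG]
            simp
          · rw [ex_smul, ex_one hα hk hS, mul_one]
        rw [e]
        linarith
    · have e : ex α S (m + 1) (fun G => rp α p (dgAt G v j)) =
          ex α S m (fun G => rp α p (dgAt G v j)) := by
        refine ex_congr α S m _ _ fun G hG => ?_
        have e1 : ∀ u, dgAt (extendTree G u) v j = dgAt G v j := fun u =>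
          dgAt_ext_of_le G u (by omega) h
        simp only [e1]
        rw [← Finset.sum_mul, wt_sum hα hk hS hG, one_mul]
      rw [e]
      exact ih v j hkj hv h

include hα hk hS in
lemma pow_moment {p : ℕ} (hp : 1 + α ≤ p) : ∃ C : ℝ, 0 ≤ C ∧ ∀ m v j, k ≤ j → v < j → j ≤ k + m →
    ex α S m (fun G => (dgAt G v j : ℝ) ^ p) ≤
      C * (((j : ℝ) / ((v : ℝ) + 1)) ^ (1 / (1 + α))) ^ p := by
  obtain ⟨C, hC, h⟩ := rp_moment hα hk hS hp
  set a : ℝ := (p : ℝ) / (1 + α) with ha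
  have h1α : 0 < 1 + α := by linarith
  have ha0 : 0 ≤ a := by positivity
  have hm : 0 < min 1 α := lt_min one_pos hα
  have hq : 0 < α / (1 + α) := by positivity
  refine ⟨C / ((min 1 α) ^ p * (α / (1 + α)) ^ a), by positivity, fun m v j hkj hv hj => ?_⟩
  have h1 := h m v j hkj hv hj
  have h2 : (min 1 α) ^ p * ex α S m (fun G => (dgAt G v j : ℝ) ^ p) ≤
      ex α S m (fun G => rp α p (dgAt G v j)) := by
    rw [← ex_smul]
    refine ex_mono α S m _ _ fun G hG => pow_le_rp hα p ?_
    exact_mod_cast reach_dgAt_pos hk hS m G hG v j hkj hv hj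
  have h0 : 0 ≤ ex α S m (fun G => (dgAt G v j : ℝ) ^ p) :=
    ex_nonneg α S m _ fun G _ => by positivity
  have hv1 : (0 : ℝ) < (v : ℝ) + 1 := by positivity
  have h3 : (α / (1 + α)) * ((v : ℝ) + 1) ≤ ((max (v + 1) k : ℕ) : ℝ) - 2 / (1 + α) := by
    have e1 : ((v : ℝ) + 1) ≤ ((max (v + 1) k : ℕ) : ℝ) := by
      exact_mod_cast le_max_left (v + 1) k
    have e2 : (2 : ℝ) ≤ ((max (v + 1) k : ℕ) : ℝ) := by
      exact_mod_cast hk.trans (le_max_right (v + 1) k)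
    set b := ((max (v + 1) k : ℕ) : ℝ)
    have e3 : b - 2 / (1 + α) - α / (1 + α) * b = (b - 2) / (1 + α) := by field_simp; ring
    have e4 : 0 ≤ (b - 2) / (1 + α) := div_nonneg (by linarith) h1α.le
    have e5 : α / (1 + α) * ((v : ℝ) + 1) ≤ α / (1 + α) * b :=
      mul_le_mul_of_nonneg_left e1 hq.le
    linarith
  have h4 := Real.rpow_le_rpow (by positivity) h3 ha0
  rw [Real.mul_rpow hq.le hv1.le] at h4
  have h5 : ((j : ℝ) - 2 / (1 + α)) ^ a ≤ (j : ℝ) ^ a := by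
    refine Real.rpow_le_rpow ?_ (by linarith [div_pos two_pos h1α]) ha0
    have : (2 : ℝ) ≤ j := by exact_mod_cast hk.trans hkj
    rw [sub_nonneg, div_le_iff₀ h1α]
    nlinarith
  have h6 : (((j : ℝ) / ((v : ℝ) + 1)) ^ (1 / (1 + α))) ^ p =
      (j : ℝ) ^ a / ((v : ℝ) + 1) ^ a := by
    rw [← Real.rpow_mul_natCast (by positivity), Real.div_rpow (by positivity) hv1.le]
    congr 2 <;> · rw [ha]; ring
  rw [h6, div_mul_div_comm, le_div_iff₀ (by positivity)]
  set E := ex α S m (fun G => (dgAt G v j : ℝ) ^ p)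
  set R := ex α S m (fun G => rp α p (dgAt G v j))
  calc E * (min 1 α ^ p * (α / (1 + α)) ^ a * ((v : ℝ) + 1) ^ a)
      = (min 1 α ^ p * E) * ((α / (1 + α)) ^ a * ((v : ℝ) + 1) ^ a) := by ring
    _ ≤ R * (((max (v + 1) k : ℕ) : ℝ) - 2 / (1 + α)) ^ a :=
        mul_le_mul h2 h4 (by positivity) (le_trans (by positivity) h2)
    _ ≤ C * ((j : ℝ) - 2 / (1 + α)) ^ a := h1
    _ ≤ C * (j : ℝ) ^ a := mul_le_mul_of_nonneg_left h5 hC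

/-- The control variable: `1` plus the `p`-th powers of all normalised degrees, at the final time
`n` (with a loss `(v + 1) ^ ε`) and at all intermediate times `j` (with a loss `j ^ ε`). Its root of
order `p` dominates every normalised degree, up to these losses. -/
def ctrl (γ ε : ℝ) (p k : ℕ) {n : ℕ} (G : SimpleGraph (Fin n)) : ℝ :=
  1 + (∑ v ∈ Finset.range n,
      (((v : ℝ) + 1) ^ (-ε) * dgAt G v n * (((v : ℝ) + 1) / n) ^ γ) ^ p +
    ∑ j ∈ Finset.Icc k n, ∑ v ∈ Finset.range j,
      ((j : ℝ) ^ (-ε) * dgAt G v j * (((v : ℝ) + 1) / j) ^ γ) ^ p)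

lemma rpow_neg_pow_le {ε : ℝ} {p : ℕ} (hp : 3 ≤ ε * p) {x : ℝ} (hx : 1 ≤ x) :
    (x ^ (-ε)) ^ p ≤ 1 / x ^ 3 := by
  have h0 : 0 < x := by linarith
  rw [← Real.rpow_mul_natCast h0.le, neg_mul, Real.rpow_neg h0.le, one_div]
  refine inv_anti₀ (by positivity) ?_
  rw [← Real.rpow_natCast]
  exact Real.rpow_le_rpow_of_exponent_le hx (by simpa using hp)

include hα hk hS in
/-- Since `ε p ≥ 3`, the losses make the sum over all vertices and times of the bounded `p`-th
moments converge. -/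
lemma ctrl_expectation {ε : ℝ} {p : ℕ} (hp : 1 + α ≤ p) (hεp : 3 ≤ ε * p) :
    ∃ C : ℝ, ∀ m, ex α S m (fun G => ctrl (1 / (1 + α)) ε p k G) ≤ C := by
  obtain ⟨C, hC, h⟩ := pow_moment hα hk hS hp
  set γ := 1 / (1 + α)
  have hs : Summable fun i : ℕ => 1 / (i : ℝ) ^ 2 := Real.summable_one_div_nat_pow.2 (by norm_num)
  set Z := ∑' i : ℕ, 1 / (i : ℝ) ^ 2 with hZ
  -- each individual term contributes its prefactor, up to the constant `C`
  have key : ∀ m v j, k ≤ j → v < j → j ≤ k + m → ∀ x : ℝ, 1 ≤ x →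
      ex α S m (fun G => (x ^ (-ε) * dgAt G v j * (((v : ℝ) + 1) / j) ^ γ) ^ p) ≤
        C * (1 / x ^ 3) := by
    intro m v j hkj hv hj x hx
    have hj0 : (0 : ℝ) < j := by exact_mod_cast (by omega : 0 < j)
    have hv0 : (0 : ℝ) < (v : ℝ) + 1 := by positivity
    have e : (fun G : SimpleGraph (Fin (k + m)) =>
        (x ^ (-ε) * dgAt G v j * (((v : ℝ) + 1) / j) ^ γ) ^ p) =
        fun G => ((x ^ (-ε)) ^ p * ((((v : ℝ) + 1) / j) ^ γ) ^ p) * (dgAt G v j : ℝ) ^ p := by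
      ext G; rw [mul_pow, mul_pow]; ring
    rw [e, ex_smul]
    refine (mul_le_mul_of_nonneg_left (h m v j hkj hv hj) (by positivity)).trans ?_
    have e2 : ((((v : ℝ) + 1) / j) ^ γ) ^ p * (((j : ℝ) / ((v : ℝ) + 1)) ^ γ) ^ p = 1 := by
      rw [← mul_pow, ← Real.mul_rpow (by positivity) (by positivity), div_mul_div_comm,
        mul_comm ((v : ℝ) + 1), div_self (by positivity), Real.one_rpow, one_pow]
    calc _ = (((((v : ℝ) + 1) / j) ^ γ) ^ p * (((j : ℝ) / ((v : ℝ) + 1)) ^ γ) ^ p) *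
          (C * (x ^ (-ε)) ^ p) := by ring
      _ = C * (x ^ (-ε)) ^ p := by rw [e2, one_mul]
      _ ≤ _ := mul_le_mul_of_nonneg_left (rpow_neg_pow_le hεp hx) hC
  refine ⟨1 + (C * Z + C * Z), fun m => ?_⟩
  unfold ctrl
  rw [ex_add, ex_one hα hk hS, ex_add, ex_sum, ex_sum]
  refine add_le_add le_rfl (add_le_add ?_ ?_)
  · calc _ ≤ ∑ v ∈ Finset.range (k + m), C * (1 / ((v + 1 : ℕ) : ℝ) ^ 2) := by
          refine Finset.sum_le_sum fun v hv => ?_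
          have hv1 : (1 : ℝ) ≤ (v : ℝ) + 1 := by linarith [(Nat.cast_nonneg v : (0 : ℝ) ≤ v)]
          refine (key m v (k + m) (by omega) (Finset.mem_range.1 hv) le_rfl _ hv1).trans ?_
          refine mul_le_mul_of_nonneg_left ?_ hC
          push_cast
          exact one_div_le_one_div_of_le (by positivity) (pow_le_pow_right₀ hv1 (by norm_num))
      _ = C * ∑ i ∈ (Finset.range (k + m)).image (fun t : ℕ => t + 1), (1 / (i : ℝ) ^ 2) := by
          rw [← Finset.mul_sum, Finset.sum_image (fun a _ b _ h => by simpa using h)]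
      _ ≤ C * Z := by
          refine mul_le_mul_of_nonneg_left ?_ hC
          exact hs.sum_le_tsum _ fun i _ => by positivity
  · calc _ ≤ ∑ j ∈ Finset.Icc k (k + m), C * (1 / (j : ℝ) ^ 2) := by
          refine Finset.sum_le_sum fun j hj => ?_
          obtain ⟨hj1, hj2⟩ := Finset.mem_Icc.1 hj
          have hj0 : (1 : ℝ) ≤ j := by exact_mod_cast (by omega : 1 ≤ j)
          rw [ex_sum]
          refine (Finset.sum_le_sum fun v hv =>
            key m v j hj1 (Finset.mem_range.1 hv) hj2 _ hj0).trans (le_of_eq ?_)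
          rw [Finset.sum_const, Finset.card_range, nsmul_eq_mul]
          field_simp
      _ ≤ C * Z := by
          rw [← Finset.mul_sum]
          refine mul_le_mul_of_nonneg_left ?_ hC
          exact hs.sum_le_tsum _ fun i _ => by positivity

end Moments

/-- The pathwise consequences of the control variable. -/
lemma ctrl_bounds {γ ε : ℝ} {p k n : ℕ} (hp : p ≠ 0)
    (G : SimpleGraph (Fin n)) :
    1 ≤ (ctrl γ ε p k G) ^ (1 / (p : ℝ)) ∧
    (∀ v < n, (dgAt G v n : ℝ) ≤
      (ctrl γ ε p k G) ^ (1 / (p : ℝ)) * (n : ℝ) ^ γ * ((v : ℝ) + 1) ^ (ε - γ)) ∧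
    (∀ v j, k ≤ j → v < j → j ≤ n → (dgAt G v j : ℝ) ≤
      (ctrl γ ε p k G) ^ (1 / (p : ℝ)) * (j : ℝ) ^ (γ + ε) * ((v : ℝ) + 1) ^ (-γ)) := by
  set A : ℕ → ℝ := fun v => (((v : ℝ) + 1) ^ (-ε) * dgAt G v n * (((v : ℝ) + 1) / n) ^ γ) with hA
  set B : ℕ → ℕ → ℝ := fun j v => ((j : ℝ) ^ (-ε) * dgAt G v j * (((v : ℝ) + 1) / j) ^ γ) with hB
  have hA0 : ∀ v, 0 ≤ A v := fun v => by positivity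
  have hB0 : ∀ j v, 0 ≤ B j v := fun j v => by positivity
  have hQ : ctrl γ ε p k G = 1 + (∑ v ∈ Finset.range n, A v ^ p +
    ∑ j ∈ Finset.Icc k n, ∑ v ∈ Finset.range j, B j v ^ p) := rfl
  have s1 : 0 ≤ ∑ v ∈ Finset.range n, A v ^ p :=
    Finset.sum_nonneg fun v _ => pow_nonneg (hA0 v) p
  have s2 : 0 ≤ ∑ j ∈ Finset.Icc k n, ∑ v ∈ Finset.range j, B j v ^ p :=
    Finset.sum_nonneg fun j _ => Finset.sum_nonneg fun v _ => pow_nonneg (hB0 j v) p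
  set Q := ctrl γ ε p k G
  have root : ∀ x : ℝ, 0 ≤ x → x ^ p ≤ Q → x ≤ Q ^ (1 / (p : ℝ)) := by
    intro x hx h
    rw [one_div, ← Real.pow_rpow_inv_natCast hx hp]
    exact Real.rpow_le_rpow (pow_nonneg hx p) h (by positivity)
  refine ⟨root 1 zero_le_one (by rw [one_pow]; linarith), fun v hv => ?_, fun v j hkj hv hj => ?_⟩
  · have h1 : A v ≤ Q ^ (1 / (p : ℝ)) := by
      refine root _ (hA0 v) ?_
      have := Finset.single_le_sum (f := fun v => A v ^ p) (fun v _ => pow_nonneg (hA0 v) p)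
        (Finset.mem_range.2 hv)
      linarith
    have hn0 : (0 : ℝ) < n := by exact_mod_cast (by omega : 0 < n)
    have hv0 : (0 : ℝ) < (v : ℝ) + 1 := by positivity
    have e : (dgAt G v n : ℝ) = A v * (n : ℝ) ^ γ * ((v : ℝ) + 1) ^ (ε - γ) := by
      simp only [hA]
      rw [Real.div_rpow hv0.le hn0.le, Real.rpow_sub hv0, Real.rpow_neg hv0.le]
      field_simp
    rw [e]
    gcongr
  · have h1 : B j v ≤ Q ^ (1 / (p : ℝ)) := by
      refine root _ (hB0 j v) ?_
      have i1 := Finset.single_le_sum (f := fun v => B j v ^ p)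
        (fun v _ => pow_nonneg (hB0 j v) p) (Finset.mem_range.2 hv)
      have i2 := Finset.single_le_sum (f := fun j => ∑ v ∈ Finset.range j, B j v ^ p)
        (fun j _ => Finset.sum_nonneg fun v _ => pow_nonneg (hB0 j v) p)
        (Finset.mem_Icc.2 ⟨hkj, hj⟩)
      linarith
    have hj0 : (0 : ℝ) < j := by exact_mod_cast (by omega : 0 < j)
    have hv0 : (0 : ℝ) < (v : ℝ) + 1 := by positivity
    have e : (dgAt G v j : ℝ) = B j v * (j : ℝ) ^ (γ + ε) * ((v : ℝ) + 1) ^ (-γ) := by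
      simp only [hB]
      rw [Real.div_rpow hv0.le hj0.le, Real.rpow_add hj0, Real.rpow_neg hv0.le,
        Real.rpow_neg hj0.le]
      field_simp
    rw [e]
    gcongr

/-! ### Summation over embeddings of a tree -/

open Classical in
/-- A sum over `Y` of terms bounded in terms of the rank of the element in `Y`. -/
lemma sum_le_of_rank (w f : ℕ → ℝ) (Y : Finset ℕ)
    (h : ∀ y ∈ Y, w y ≤ f (Y.filter (· ≤ y)).card) :
    ∑ y ∈ Y, w y ≤ ∑ i ∈ Finset.range Y.card, f (i + 1) := by
  induction Y using Finset.induction_on_max with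
  | empty => simp
  | insert a s ha ih =>
    have hn : a ∉ s := fun h => lt_irrefl _ (ha a h)
    rw [Finset.sum_insert hn, Finset.card_insert_of_notMem hn, Finset.sum_range_succ, add_comm]
    refine add_le_add (ih fun y hy => ?_) ?_
    · have := h y (Finset.mem_insert_of_mem hy)
      rwa [Finset.filter_insert, if_neg (not_le.2 (ha y hy))] at this
    · have := h a (Finset.mem_insert_self _ _)
      rwa [Finset.filter_true_of_mem, Finset.card_insert_of_notMem hn] at this
      intro x hx
      rcases Finset.mem_insert.1 hx with rfl | hx
      · exact le_rfl
      · exact (ha x hx).le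

open Classical in
/-- The later neighbours of `u` outside the seed. -/
def later (k : ℕ) {n : ℕ} (G : SimpleGraph (Fin n)) (u : ℕ) : Finset ℕ :=
  (Finset.range n).filter fun y => adjN G u y ∧ u < y ∧ k ≤ y

/-- If the degrees of `u` are controlled at all times, the `i`-th later neighbour of `u` is born at
a time of order at least `((u + 1) ^ γ i / K) ^ (1 / δ)`, whence this bound on the sum of
`(y + 1) ^ (-s)` over the later neighbours `y` of `u`. -/
lemma later_sum {γ δ s : ℝ} (hδ : 0 < δ) (hs : δ < s) (k : ℕ) : ∃ C : ℝ, 0 ≤ C ∧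
    ∀ (n : ℕ) (G : SimpleGraph (Fin n)) (K : ℝ), 1 ≤ K →
      (∀ v j, k ≤ j → v < j → j ≤ n →
        (dgAt G v j : ℝ) ≤ K * (j : ℝ) ^ δ * ((v : ℝ) + 1) ^ (-γ)) →
      ∀ u, ∑ y ∈ later k G u, ((y : ℝ) + 1) ^ (-s) ≤
        C * K ^ (s / δ) * ((u : ℝ) + 1) ^ (-(γ / δ * s)) := by
  classical
  have hsd : 1 < s / δ := (one_lt_div hδ).2 hs
  have hsum : Summable fun i : ℕ => 1 / (i : ℝ) ^ (s / δ) := Real.summable_one_div_nat_rpow.2 hsd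
  refine ⟨∑' i : ℕ, 1 / (i : ℝ) ^ (s / δ), tsum_nonneg fun i => by positivity, ?_⟩
  intro n G K hK hd u
  have hK0 : 0 < K := by linarith
  have hu0 : (0 : ℝ) < (u : ℝ) + 1 := by positivity
  set B : ℝ := K ^ (s / δ) * ((u : ℝ) + 1) ^ (-(γ / δ * s)) with hB
  have h1 := sum_le_of_rank (fun y => ((y : ℝ) + 1) ^ (-s))
    (fun i => B * (1 / (i : ℝ) ^ (s / δ))) (later k G u) ?_
  · refine h1.trans ?_
    rw [← Finset.mul_sum]
    have h2 : ∑ i ∈ Finset.range (later k G u).card, 1 / ((i + 1 : ℕ) : ℝ) ^ (s / δ) ≤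
        ∑' i : ℕ, 1 / (i : ℝ) ^ (s / δ) := by
      rw [← Finset.sum_image (s := Finset.range (later k G u).card) (g := fun t : ℕ => t + 1)
        (f := fun t : ℕ => 1 / (t : ℝ) ^ (s / δ)) (fun a _ b _ h => by simpa using h)]
      exact hsum.sum_le_tsum _ fun i _ => by positivity
    refine (mul_le_mul_of_nonneg_left h2 (by positivity)).trans (le_of_eq ?_)
    rw [hB]; ring
  · intro y hy
    have hy' := hy
    simp only [later, Finset.mem_filter, Finset.mem_range] at hy'
    obtain ⟨hyn, hya, huy, hky⟩ := hy'
    set r := ((later k G u).filter (· ≤ y)).card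
    have hr0 : 0 < r := Finset.card_pos.2 ⟨y, by simp [hy]⟩
    have hr : r ≤ dgAt G u (y + 1) := by
      refine Finset.card_le_card fun z hz => ?_
      simp only [later, Finset.mem_filter, Finset.mem_range] at hz ⊢
      exact ⟨by omega, hz.1.2.1⟩
    have h2 : (r : ℝ) ≤ K * ((y : ℝ) + 1) ^ δ * ((u : ℝ) + 1) ^ (-γ) := by
      have := hd u (y + 1) (by omega) (by omega) (by omega)
      push_cast at this
      exact le_trans (by exact_mod_cast hr) this
    have hy0 : (0 : ℝ) < (y : ℝ) + 1 := by positivity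
    have hr0' : (0 : ℝ) < r := by exact_mod_cast hr0
    have h3 := Real.rpow_le_rpow hr0'.le h2 (by positivity : 0 ≤ s / δ)
    rw [Real.mul_rpow (by positivity) (by positivity), Real.mul_rpow (by positivity)
      (by positivity), ← Real.rpow_mul hy0.le, ← Real.rpow_mul hu0.le,
      mul_div_cancel₀ s hδ.ne', show -γ * (s / δ) = -(γ / δ * s) by ring] at h3
    rw [Real.rpow_neg hy0.le, mul_one_div, le_div_iff₀ (by positivity), inv_mul_le_iff₀
      (by positivity)]
    linarith

open Classical in
/-- Injective graph homomorphisms, as a finite set of functions. -/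
def injHom {V : Type} [Fintype V] (τ : SimpleGraph V) {n : ℕ} (G : SimpleGraph (Fin n)) :
    Finset (V → Fin n) :=
  Finset.univ.filter fun φ => Function.Injective φ ∧ ∀ a b, τ.Adj a b → G.Adj (φ a) (φ b)

/-- The weight of a copy `φ`: a vertex with label `y` in the role of `u` contributes the factor
`(y + 1) ^ (-s u)`. -/
def copyWt {V : Type} [Fintype V] (s : V → ℝ) {n : ℕ} (φ : V → Fin n) : ℝ :=
  ∏ u, (((φ u : ℕ) : ℝ) + 1) ^ (-s u)

lemma copyWt_nonneg {V : Type} [Fintype V] (s : V → ℝ) {n : ℕ} (φ : V → Fin n) :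
    0 ≤ copyWt s φ := Finset.prod_nonneg fun u _ => by positivity

open Classical in
/-- Copies lying in the seed contribute a bounded amount. -/
lemma seed_part {V : Type} [Fintype V] (τ : SimpleGraph V) (s : V → ℝ) (hs : ∀ u, 0 ≤ s u)
    (k : ℕ) {n : ℕ} (G : SimpleGraph (Fin n)) :
    ∑ φ ∈ (injHom τ G).filter (fun φ => ∀ u, (φ u : ℕ) < k), copyWt s φ ≤
      (k : ℝ) ^ Fintype.card V := by
  set t : Finset (Fin n) := Finset.univ.filter fun y => (y : ℕ) < k
  have ht : t.card ≤ k := by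
    rw [← Finset.card_range k]
    refine Finset.card_le_card_of_injOn (fun y => (y : ℕ)) ?_ (fun a _ b _ h => Fin.ext h)
    intro y hy
    simpa [t] using hy
  calc _ ≤ ∑ φ ∈ (injHom τ G).filter (fun φ => ∀ u, (φ u : ℕ) < k), (1 : ℝ) := by
        refine Finset.sum_le_sum fun φ _ => ?_
        refine Finset.prod_le_one (fun u _ => by positivity) fun u _ => ?_
        refine Real.rpow_le_one_of_one_le_of_nonpos ?_ (by linarith [hs u])
        have : (0 : ℝ) ≤ ((φ u : ℕ) : ℝ) := Nat.cast_nonneg _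
        linarith
    _ = (((injHom τ G).filter (fun φ => ∀ u, (φ u : ℕ) < k)).card : ℝ) := by simp
    _ ≤ ((Fintype.piFinset fun _ : V => t).card : ℝ) := by
        have : ((injHom τ G).filter (fun φ => ∀ u, (φ u : ℕ) < k)).card ≤
            (Fintype.piFinset fun _ : V => t).card := by
          refine Finset.card_le_card fun φ hφ => ?_
          rw [Fintype.mem_piFinset]
          intro u
          simpa [t] using (Finset.mem_filter.1 hφ).2 u
        exact_mod_cast this
    _ ≤ _ := by
        rw [Fintype.card_piFinset, Finset.prod_const, Finset.card_univ]
        push_cast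
        gcongr

open Classical in
/-- A copy whose last vertex `φ u` lies outside the seed restricts to a copy of `τ` without the leaf
`u`, and `φ u` is a later neighbour of `φ p`, where `p` is the neighbour of the leaf. -/
lemma leaf_part {V : Type} [Fintype V] (τ : SimpleGraph V) (s : V → ℝ) {γ δ : ℝ} (hδ : 0 < δ)
    (k : ℕ) (u p : V) (hu : δ < s u) (hup : τ.Adj u p) (hpu : p ≠ u)
    (C M : ℝ) (hC : 0 ≤ C)
    (ih : ∀ (n : ℕ) (G : SimpleGraph (Fin n)) (K : ℝ), 1 ≤ K →
      (∀ v a b, k ≤ v → a < v → b < v → adjN G v a → adjN G v b → a = b) →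
      (∀ v j, k ≤ j → v < j → j ≤ n →
        (dgAt G v j : ℝ) ≤ K * (j : ℝ) ^ δ * ((v : ℝ) + 1) ^ (-γ)) →
      ∑ ψ ∈ injHom (τ.comap (Subtype.val : {i // i ≠ u} → V)) G,
        copyWt (fun w : {i // i ≠ u} => s w + if w = ⟨p, hpu⟩ then γ / δ * s u else 0) ψ ≤
        C * K ^ M) :
    ∃ C' : ℝ, 0 ≤ C' ∧ ∀ (n : ℕ) (G : SimpleGraph (Fin n)) (K : ℝ), 1 ≤ K →
      (∀ v a b, k ≤ v → a < v → b < v → adjN G v a → adjN G v b → a = b) →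
      (∀ v j, k ≤ j → v < j → j ≤ n →
        (dgAt G v j : ℝ) ≤ K * (j : ℝ) ^ δ * ((v : ℝ) + 1) ^ (-γ)) →
      ∑ φ ∈ (injHom τ G).filter (fun φ => k ≤ (φ u : ℕ) ∧ ∀ w, w ≠ u → (φ w : ℕ) < φ u),
        copyWt s φ ≤ C' * K ^ (M + s u / δ) := by
  obtain ⟨C₀, hC₀, hlater⟩ := later_sum (γ := γ) hδ hu k
  refine ⟨C₀ * C, by positivity, fun n G K hK hP hD => ?_⟩
  have hK0 : 0 < K := by linarith
  set A := (injHom τ G).filter (fun φ => k ≤ (φ u : ℕ) ∧ ∀ w, w ≠ u → (φ w : ℕ) < φ u) with hA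
  set τ' := τ.comap (Subtype.val : {i // i ≠ u} → V)
  -- a copy is encoded by its restriction and the label of the removed leaf
  set e : (V → Fin n) → (Σ _ : {i // i ≠ u} → Fin n, ℕ) := fun φ => ⟨fun w => φ w, φ u⟩ with he
  set g : (Σ _ : {i // i ≠ u} → Fin n, ℕ) → ℝ := fun x =>
    ((x.2 : ℝ) + 1) ^ (-s u) * copyWt (fun w : {i // i ≠ u} => s w) x.1 with hg
  set T := (injHom τ' G).sigma fun ψ => later k G (ψ ⟨p, hpu⟩) with hT
  have hinj : Set.InjOn e A := by
    intro φ _ φ' _ h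
    simp only [he, Sigma.mk.injEq, heq_eq_eq] at h
    funext w
    by_cases hw : w = u
    · subst hw; exact Fin.ext h.2
    · exact congrFun h.1 ⟨w, hw⟩
  have hmaps : A.image e ⊆ T := by
    intro x hx
    obtain ⟨φ, hφ, rfl⟩ := Finset.mem_image.1 hx
    simp only [hA, injHom, Finset.mem_filter, Finset.mem_univ, true_and] at hφ
    obtain ⟨⟨h1, h2⟩, h3, h4⟩ := hφ
    simp only [hT, he, Finset.mem_sigma, injHom, later, Finset.mem_filter, Finset.mem_univ,
      true_and, Finset.mem_range]
    refine ⟨⟨fun a b h => Subtype.ext (h1 h), fun a b h => h2 _ _ h⟩, (φ u).2, ?_, h4 p hpu, h3⟩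
    exact (adjN_val G _ _).2 (h2 _ _ hup.symm)
  have hval : ∀ φ ∈ A, copyWt s φ = g (e φ) := fun φ _ => by
    simp only [copyWt, hg, he]
    rw [Fintype.prod_eq_mul_prod_subtype_ne _ u]
  calc ∑ φ ∈ A, copyWt s φ = ∑ x ∈ A.image e, g x := by
        rw [Finset.sum_image hinj]
        exact Finset.sum_congr rfl hval
    _ ≤ ∑ x ∈ T, g x := Finset.sum_le_sum_of_subset_of_nonneg hmaps fun x _ _ =>
        mul_nonneg (by positivity) (copyWt_nonneg _ _)
    _ = ∑ ψ ∈ injHom τ' G, (∑ y ∈ later k G (ψ ⟨p, hpu⟩), ((y : ℝ) + 1) ^ (-s u)) *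
          copyWt (fun w : {i // i ≠ u} => s w) ψ := by
        rw [hT, Finset.sum_sigma]
        refine Finset.sum_congr rfl fun ψ _ => ?_
        rw [Finset.sum_mul]
    _ ≤ ∑ ψ ∈ injHom τ' G, (C₀ * K ^ (s u / δ)) *
          copyWt (fun w : {i // i ≠ u} => s w + if w = ⟨p, hpu⟩ then γ / δ * s u else 0) ψ := by
        refine Finset.sum_le_sum fun ψ _ => ?_
        refine (mul_le_mul_of_nonneg_right (hlater n G K hK hD _) (copyWt_nonneg _ _)).trans
          (le_of_eq ?_)
        rw [mul_assoc]
        congr 1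
        have e1 : copyWt (fun w : {i // i ≠ u} => s w + if w = ⟨p, hpu⟩ then γ / δ * s u else 0) ψ =
            copyWt (fun w : {i // i ≠ u} => s w) ψ *
              ∏ w : {i // i ≠ u}, (if w = ⟨p, hpu⟩ then
                (((ψ ⟨p, hpu⟩ : ℕ) : ℝ) + 1) ^ (-(γ / δ * s u)) else 1) := by
          rw [copyWt, copyWt, ← Finset.prod_mul_distrib]
          refine Finset.prod_congr rfl fun w _ => ?_
          by_cases h : w = ⟨p, hpu⟩
          · rw [if_pos h, if_pos h, ← h, neg_add, Real.rpow_add (by positivity)]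
          · rw [if_neg h, if_neg h, add_zero, mul_one]
        rw [e1, Finset.prod_ite_eq' Finset.univ, if_pos (Finset.mem_univ _), mul_comm]
    _ ≤ (C₀ * K ^ (s u / δ)) * (C * K ^ M) := by
        rw [← Finset.mul_sum]
        exact mul_le_mul_of_nonneg_left (ih n G K hK hP hD) (by positivity)
    _ = C₀ * C * K ^ (M + s u / δ) := by
        rw [Real.rpow_add hK0]; ring

/-- The weighted number of copies of a connected `τ` is bounded by a power of the control `K`,
uniformly in the host graph. The proof removes the youngest vertex of the copy, which is a leaf of
`τ` because a non-seed vertex has only one older neighbour; a fraction `γ / δ` of the exponent of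
the leaf is transferred to its neighbour. -/
lemma copies_bound {γ δ : ℝ} (hγ : 0 < γ) (hγδ : γ ≤ δ) (k : ℕ) : ∀ (r : ℕ) (V : Type) [Fintype V],
    Fintype.card V = r + 1 → ∀ τ : SimpleGraph V, τ.Connected → ∀ s : V → ℝ, (∀ u, δ < s u) →
    1 < (γ / δ) ^ r * ∑ u, s u →
    ∃ C M : ℝ, 0 ≤ C ∧ 0 ≤ M ∧ ∀ (n : ℕ) (G : SimpleGraph (Fin n)) (K : ℝ), 1 ≤ K →
      (∀ v a b, k ≤ v → a < v → b < v → adjN G v a → adjN G v b → a = b) →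
      (∀ v j, k ≤ j → v < j → j ≤ n →
        (dgAt G v j : ℝ) ≤ K * (j : ℝ) ^ δ * ((v : ℝ) + 1) ^ (-γ)) →
      ∑ φ ∈ injHom τ G, copyWt s φ ≤ C * K ^ M := by
  classical
  have hδ : 0 < δ := hγ.trans_le hγδ
  intro r
  induction r with
  | zero =>
    intro V _ hV τ _ s _ hs1
    obtain ⟨x, hx⟩ := Fintype.card_eq_one_iff.1 hV
    have huniv : (Finset.univ : Finset V) = {x} := by
      ext y; simp [hx y]
    rw [huniv, Finset.sum_singleton, pow_zero, one_mul] at hs1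
    have hsum : Summable fun i : ℕ => 1 / (i : ℝ) ^ (s x) := Real.summable_one_div_nat_rpow.2 hs1
    refine ⟨∑' i : ℕ, 1 / (i : ℝ) ^ (s x), 0, tsum_nonneg fun i => by positivity, le_rfl, ?_⟩
    intro n G K _ _ _
    rw [Real.rpow_zero, mul_one]
    calc ∑ φ ∈ injHom τ G, copyWt s φ = ∑ i ∈ (injHom τ G).image (fun φ => (φ x : ℕ) + 1),
          1 / (i : ℝ) ^ (s x) := by
          rw [Finset.sum_image]
          · refine Finset.sum_congr rfl fun φ _ => ?_
            rw [copyWt, huniv, Finset.prod_singleton, Real.rpow_neg (by positivity), one_div]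
            push_cast
            rfl
          · intro a _ b _ h
            funext y
            rw [hx y]
            exact Fin.ext (by simpa using h)
      _ ≤ _ := hsum.sum_le_tsum _ fun i _ => by positivity
  | succ r ih =>
    intro V _ hV τ hτ s hs hs1
    have hs0 : ∀ u, 0 < s u := fun u => hδ.trans (hs u)
    have hnt : Nontrivial V := Fintype.one_lt_card_iff_nontrivial.1 (by omega)
    have leaf : ∀ u : V, ∃ C M : ℝ, 0 ≤ C ∧ 0 ≤ M ∧
        ∀ (n : ℕ) (G : SimpleGraph (Fin n)) (K : ℝ), 1 ≤ K →
        (∀ v a b, k ≤ v → a < v → b < v → adjN G v a → adjN G v b → a = b) →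
        (∀ v j, k ≤ j → v < j → j ≤ n →
          (dgAt G v j : ℝ) ≤ K * (j : ℝ) ^ δ * ((v : ℝ) + 1) ^ (-γ)) →
        ∑ φ ∈ (injHom τ G).filter (fun φ => k ≤ (φ u : ℕ) ∧ ∀ w, w ≠ u → (φ w : ℕ) < φ u),
          copyWt s φ ≤ C * K ^ M := by
      intro u
      -- only a leaf of `τ` can be played by the youngest vertex
      by_cases hdeg : τ.degree u = 1
      · obtain ⟨p, hup, _⟩ := SimpleGraph.degree_eq_one_iff_existsUnique_adj.1 hdeg
        have hpu : p ≠ u := hup.ne'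
        have hconn : (τ.comap (Subtype.val : {i // i ≠ u} → V)).Connected :=
          hτ.induce_compl_singleton_of_degree_eq_one hdeg
        have hθ : γ / δ ≤ 1 := (div_le_one hδ).2 hγδ
        have hθ0 : 0 < γ / δ := div_pos hγ hδ
        obtain ⟨C, M, hC, hM, h⟩ := ih {i // i ≠ u} (by
            rw [Fintype.card_subtype_compl, hV, Fintype.card_subtype_eq]
            omega) (τ.comap Subtype.val) hconn
          (fun w => s w + if w = ⟨p, hpu⟩ then γ / δ * s u else 0) (fun w => by
            have : 0 ≤ (if w = (⟨p, hpu⟩ : {i // i ≠ u}) then γ / δ * s u else 0) := by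
              split_ifs
              · exact (mul_pos hθ0 (hs0 u)).le
              · exact le_rfl
            linarith [hs w]) (by
            rw [Finset.sum_add_distrib, Finset.sum_ite_eq', if_pos (Finset.mem_univ _)]
            refine hs1.trans_le ?_
            rw [Fintype.sum_eq_add_sum_subtype_ne _ u, pow_succ, mul_assoc]
            refine mul_le_mul_of_nonneg_left ?_ (by positivity)
            have h0 : 0 ≤ ∑ w : {i // i ≠ u}, s w := Finset.sum_nonneg fun w _ => (hs0 w).le
            nlinarith)
        obtain ⟨C', hC', h'⟩ := leaf_part τ s hδ k u p (hs u) hup hpu C M hC h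
        exact ⟨C', M + s u / δ, hC', add_nonneg hM (div_nonneg (hs0 u).le hδ.le), h'⟩
      · refine ⟨0, 0, le_rfl, le_rfl, fun n G K hK hP _ => ?_⟩
        rw [Finset.filter_false_of_mem, Finset.sum_empty, zero_mul]
        rintro φ hφ ⟨h1, h2⟩
        apply hdeg
        simp only [injHom, Finset.mem_filter, Finset.mem_univ, true_and] at hφ
        have hpos := hτ.preconnected.degree_pos_of_nontrivial u
        obtain ⟨p, hp⟩ := (SimpleGraph.degree_pos_iff_exists_adj (G := τ) (v := u)).1 hpos
        refine SimpleGraph.degree_eq_one_iff_existsUnique_adj.2 ⟨p, hp, fun q hq => hφ.1 ?_⟩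
        refine Fin.ext (hP (φ u) _ _ h1 (h2 q hq.ne') (h2 p hp.ne') ?_ ?_)
        · exact (adjN_val G _ _).2 (hφ.2 _ _ hq)
        · exact (adjN_val G _ _).2 (hφ.2 _ _ hp)
    choose C M hC hM h using leaf
    refine ⟨(k : ℝ) ^ Fintype.card V + ∑ u, C u, ∑ u, M u,
      add_nonneg (by positivity) (Finset.sum_nonneg fun u _ => hC u),
      Finset.sum_nonneg fun u _ => hM u, fun n G K hK hP hD => ?_⟩
    have hKM : 1 ≤ K ^ (∑ u, M u) := Real.one_le_rpow hK (Finset.sum_nonneg fun u _ => hM u)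
    -- classify the copies by the role of their youngest vertex
    have split : ∑ φ ∈ injHom τ G, copyWt s φ ≤
        ∑ φ ∈ (injHom τ G).filter (fun φ => ∀ u, (φ u : ℕ) < k), copyWt s φ +
        ∑ u, ∑ φ ∈ (injHom τ G).filter
          (fun φ => k ≤ (φ u : ℕ) ∧ ∀ w, w ≠ u → (φ w : ℕ) < φ u), copyWt s φ := by
      simp only [Finset.sum_filter]
      rw [Finset.sum_comm, ← Finset.sum_add_distrib]
      refine Finset.sum_le_sum fun φ hφ => ?_
      have hw := copyWt_nonneg s φ
      have hnn : ∀ u ∈ (Finset.univ : Finset V),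
          0 ≤ (if k ≤ (φ u : ℕ) ∧ ∀ w, w ≠ u → (φ w : ℕ) < φ u then copyWt s φ else 0) := by
        intro u _
        split_ifs
        · exact hw
        · exact le_rfl
      by_cases hk : ∀ u, (φ u : ℕ) < k
      · rw [if_pos hk]
        linarith [Finset.sum_nonneg hnn]
      · rw [if_neg hk, zero_add]
        push Not at hk
        obtain ⟨u, -, hu⟩ := Finset.exists_max_image Finset.univ (fun u => (φ u : ℕ))
          Finset.univ_nonempty
        obtain ⟨u₀, hu₀⟩ := hk
        simp only [injHom, Finset.mem_filter, Finset.mem_univ, true_and] at hφ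
        have hcond : k ≤ (φ u : ℕ) ∧ ∀ w, w ≠ u → (φ w : ℕ) < φ u := by
          refine ⟨hu₀.trans (hu u₀ (Finset.mem_univ _)), fun w hwu => ?_⟩
          refine lt_of_le_of_ne (hu w (Finset.mem_univ _)) fun heq => hwu (hφ.1 (Fin.ext heq))
        have := Finset.single_le_sum hnn (Finset.mem_univ u)
        rwa [if_pos hcond] at this
    refine split.trans ?_
    rw [add_mul, Finset.sum_mul]
    refine add_le_add ?_ (Finset.sum_le_sum fun u _ => (h u n G K hK hP hD).trans ?_)
    · exact (seed_part τ s (fun u => (hs0 u).le) k G).trans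
        (le_mul_of_one_le_right (by positivity) hKM)
    · refine mul_le_mul_of_nonneg_left ?_ (hC u)
      exact Real.rpow_le_rpow_of_exponent_le hK
        (Finset.single_le_sum (fun u _ => hM u) (Finset.mem_univ u))

/-! ### The upper bound -/

lemma embWeight_nonneg {V W : Type*} [Fintype V] (T : SimpleGraph W) (ℓ : V → ℕ) (f : V → W) :
    0 ≤ embWeight T ℓ f := Finset.prod_nonneg fun _ _ => Nat.cast_nonneg _

lemma obs_nonneg (τ : DecTree) {W : Type*} (T : SimpleGraph W) : 0 ≤ τ.obs T :=
  finsum_nonneg fun φ => embWeight_nonneg T τ.dec φ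

lemma obs_le_sum (τ : DecTree) {n : ℕ} (G : SimpleGraph (Fin n)) :
    τ.obs G ≤ ∑ φ ∈ injHom τ.tree G, ∏ u, (dgAt G (φ u) n : ℝ) ^ τ.dec u := by
  classical
  have : Finite (τ.tree ↪g G) := Finite.of_injective (fun φ => (φ : Fin τ.n → Fin n))
    DFunLike.coe_injective
  have := Fintype.ofFinite (τ.tree ↪g G)
  have h1 : τ.obs G ≤ ∑ φ : τ.tree ↪g G, ∏ u, (dgAt G (φ u) n : ℝ) ^ τ.dec u := by
    rw [DecTree.obs, obsG, finsum_eq_sum_of_fintype]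
    refine Finset.sum_le_sum fun φ _ => Finset.prod_le_prod (fun u _ => Nat.cast_nonneg _)
      fun u _ => ?_
    rw [degR_eq_dgAt]
    exact_mod_cast (Nat.descFactorial_le_pow _ _).trans (Nat.pow_le_pow_left (Nat.sub_le _ _) _)
  refine h1.trans ?_
  rw [← Finset.sum_image (s := Finset.univ) (g := fun φ : τ.tree ↪g G => (φ : Fin τ.n → Fin n))
    (f := fun φ => ∏ u, (dgAt G (φ u) n : ℝ) ^ τ.dec u)
    (fun a _ b _ h => DFunLike.coe_injective h)]
  refine Finset.sum_le_sum_of_subset_of_nonneg ?_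
    (fun φ _ _ => Finset.prod_nonneg fun u _ => by positivity)
  intro f hf
  obtain ⟨φ, _, rfl⟩ := Finset.mem_image.1 hf
  simp only [injHom, Finset.mem_filter, Finset.mem_univ, true_and]
  exact ⟨φ.injective, fun a b h => φ.map_adj_iff.2 h⟩

lemma obs_le_copies (τ : DecTree) {n : ℕ} (G : SimpleGraph (Fin n)) {γ ε K : ℝ} (hK : 0 ≤ K)
    (h : ∀ v < n, (dgAt G v n : ℝ) ≤ K * (n : ℝ) ^ γ * ((v : ℝ) + 1) ^ (ε - γ)) :
    τ.obs G ≤ K ^ τ.decSum * ((n : ℝ) ^ γ) ^ τ.decSum *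
      ∑ φ ∈ injHom τ.tree G, copyWt (fun u => (γ - ε) * τ.dec u) φ := by
  refine (obs_le_sum τ G).trans ?_
  rw [Finset.mul_sum]
  refine Finset.sum_le_sum fun φ _ => ?_
  calc ∏ u, (dgAt G (φ u) n : ℝ) ^ τ.dec u
      ≤ ∏ u, (K * (n : ℝ) ^ γ * (((φ u : ℕ) : ℝ) + 1) ^ (ε - γ)) ^ τ.dec u := by
        refine Finset.prod_le_prod (fun u _ => by positivity) fun u _ => ?_
        exact pow_le_pow_left₀ (by positivity) (h _ (φ u).2) _
    _ = _ := by
        rw [DecTree.decSum, copyWt, ← mul_pow, ← Finset.prod_pow_eq_pow_sum,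
          ← Finset.prod_mul_distrib]
        refine Finset.prod_congr rfl fun u _ => ?_
        rw [mul_pow _ ((((φ u : ℕ) : ℝ) + 1) ^ (ε - γ)), ← Real.rpow_mul_natCast (by positivity)]
        congr 2
        ring

/-- A loss `ε` small enough for the exponents in the summation over copies to stay admissible. -/
lemma exists_eps {γ L : ℝ} (hγ : 0 < γ) (h : 1 < γ * L) (r : ℕ) :
    ∃ ε : ℝ, 0 < ε ∧ 3 * ε < γ ∧ 1 < (γ / (γ + ε)) ^ r * ((γ - ε) * L) := by
  have hc : ContinuousAt (fun ε : ℝ => (γ / (γ + ε)) ^ r * ((γ - ε) * L)) 0 := by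
    have : γ + 0 ≠ 0 := by simpa using hγ.ne'
    exact ((continuousAt_const.div (continuousAt_const.add continuousAt_id) this).pow r).mul
      ((continuousAt_const.sub continuousAt_id).mul continuousAt_const)
  have h0 : 1 < (γ / (γ + 0)) ^ r * ((γ - 0) * L) := by
    rw [add_zero, div_self hγ.ne', one_pow, sub_zero, one_mul]; exact h
  have e1 : ∀ᶠ ε in nhds (0 : ℝ), 1 < (γ / (γ + ε)) ^ r * ((γ - ε) * L) :=
    hc.eventually (lt_mem_nhds h0)
  have e2 : ∀ᶠ ε in nhds (0 : ℝ), ε < γ / 3 := gt_mem_nhds (by positivity)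
  have e3 : ∀ᶠ ε in nhdsWithin (0 : ℝ) (Set.Ioi 0), 0 < ε := self_mem_nhdsWithin
  obtain ⟨ε, h1, h2, h3⟩ :=
    ((e1.filter_mono nhdsWithin_le_nhds).and ((e2.filter_mono nhdsWithin_le_nhds).and e3)).exists
  exact ⟨ε, h3, by linarith, h1⟩

lemma upper_bound {α : ℝ} (hα : 0 < α) (τ : DecTree) (hτ : τ.tree.IsTree)
    (hdec : ∀ u, 2 ≤ τ.dec u) (hsum : 1 + α < (τ.decSum : ℝ))
    {k : ℕ} (hk : 2 ≤ k) {S : SimpleGraph (Fin k)} (hS : S.IsTree) :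
    ∃ C : ℝ, ∀ m, ex α S m (fun G => τ.obs G ^ 2) ≤
      C * ((k + m : ℕ) : ℝ) ^ (2 * (τ.decSum : ℝ) / (1 + α)) := by
  have h1α : 0 < 1 + α := by linarith
  set γ : ℝ := 1 / (1 + α) with hγdef
  have hγ : 0 < γ := by positivity
  have hγL : 1 < γ * (τ.decSum : ℝ) := by
    rw [hγdef, one_div_mul_eq_div, lt_div_iff₀ h1α]; linarith
  have : Nonempty (Fin τ.n) := hτ.connected.nonempty
  have hn : 0 < τ.n := Fin.pos_iff_nonempty.2 this
  obtain ⟨ε, hε, hε3, hε1⟩ := exists_eps hγ hγL (τ.n - 1)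
  obtain ⟨C, M, hC, hM, hcop⟩ := copies_bound hγ (by linarith : γ ≤ γ + ε) k (τ.n - 1) (Fin τ.n)
    (by rw [Fintype.card_fin]; omega) τ.tree hτ.connected (fun u => (γ - ε) * τ.dec u)
    (fun u => by
      have : (2 : ℝ) ≤ τ.dec u := by exact_mod_cast hdec u
      nlinarith)
    (by
      rw [← Finset.mul_sum, ← Nat.cast_sum]
      exact hε1)
  obtain ⟨p, hp⟩ := exists_nat_ge (max (max (3 / ε) (2 * (τ.decSum + M))) (1 + α))
  have hp1 : 1 + α ≤ p := (le_max_right _ _).trans hp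
  have hp2 : 2 * (τ.decSum + M) ≤ p := (le_max_right _ _).trans ((le_max_left _ _).trans hp)
  have hp3 : 3 ≤ ε * p := by
    have : 3 / ε ≤ p := (le_max_left _ _).trans ((le_max_left _ _).trans hp)
    rw [div_le_iff₀ hε] at this
    linarith
  have hp0 : (0 : ℝ) < p := by linarith
  obtain ⟨Q, hQ⟩ := ctrl_expectation hα hk hS hp1 hp3
  refine ⟨C ^ 2 * Q, fun m => ?_⟩
  set X : ℝ := ((k + m : ℕ) : ℝ) ^ (2 * (τ.decSum : ℝ) / (1 + α)) with hX
  have hX0 : 0 ≤ X := by positivity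
  have hmain : ∀ G, Reach S m G → τ.obs G ^ 2 ≤ (C ^ 2 * X) * ctrl γ ε p k G := by
    intro G hG
    obtain ⟨hK, hA, hB⟩ := ctrl_bounds (γ := γ) (ε := ε) (p := p) (k := k)
      (by exact_mod_cast hp0.ne') G
    have hQ0 : 0 ≤ ctrl γ ε p k G := by unfold ctrl; positivity
    have hKp : (ctrl γ ε p k G ^ (1 / (p : ℝ))) ^ (p : ℝ) = ctrl γ ε p k G := by
      rw [← Real.rpow_mul hQ0, one_div_mul_cancel hp0.ne', Real.rpow_one]
    set K := ctrl γ ε p k G ^ (1 / (p : ℝ))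
    have hK0 : 0 < K := by linarith
    have hpar : ∀ v a b, k ≤ v → a < v → b < v → adjN G v a → adjN G v b → a = b :=
      fun v a b h1 h2 h3 h4 h5 => reach_parent_unique m G hG v a b h1 h2 h3 h4 h5
    have h1 := obs_le_copies τ G hK0.le hA
    have h2 := hcop (k + m) G K hK hpar hB
    have h3 : τ.obs G ≤ K ^ τ.decSum * (((k + m : ℕ) : ℝ) ^ γ) ^ τ.decSum * (C * K ^ M) :=
      h1.trans (mul_le_mul_of_nonneg_left h2 (by positivity))
    calc τ.obs G ^ 2 ≤ (K ^ τ.decSum * (((k + m : ℕ) : ℝ) ^ γ) ^ τ.decSum * (C * K ^ M)) ^ 2 :=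
          pow_le_pow_left₀ (obs_nonneg τ G) h3 2
      _ = C ^ 2 * X * K ^ (2 * (τ.decSum + M)) := by
          have e1 : K ^ (2 * (τ.decSum + M)) = (K ^ τ.decSum * K ^ M) ^ 2 := by
            rw [mul_comm 2, Real.rpow_mul hK0.le, Real.rpow_add hK0, Real.rpow_natCast]
            norm_cast
          have e2 : X = ((((k + m : ℕ) : ℝ) ^ γ) ^ τ.decSum) ^ 2 := by
            rw [← pow_mul, ← Real.rpow_mul_natCast (by positivity), hX]
            congr 1
            push_cast
            rw [hγdef]
            ring
          rw [e1, e2]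
          ring
      _ ≤ C ^ 2 * X * K ^ (p : ℝ) := by
          refine mul_le_mul_of_nonneg_left ?_ (by positivity)
          exact Real.rpow_le_rpow_of_exponent_le hK hp2
      _ = _ := by rw [hKp]
  calc _ ≤ ex α S m (fun G => (C ^ 2 * X) * ctrl γ ε p k G) := ex_mono α S m _ _ hmain
    _ = (C ^ 2 * X) * ex α S m (fun G => ctrl γ ε p k G) := ex_smul α S m _ _
    _ ≤ (C ^ 2 * X) * Q := mul_le_mul_of_nonneg_left (hQ m) (by positivity)
    _ = _ := by ring

/-! ### The lower bound -/

/-- `φ` is an embedding of `τ` into `G`, as a map to natural-number labels. -/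
def EmbN {V : Type} (τ : SimpleGraph V) (φ : V → ℕ) {n : ℕ} (G : SimpleGraph (Fin n)) : Prop :=
  Function.Injective φ ∧ (∀ u, φ u < n) ∧ ∀ a b, adjN G (φ a) (φ b) ↔ τ.Adj a b

lemma EmbN.ext {V : Type} {τ : SimpleGraph V} {φ : V → ℕ} {n : ℕ} {G : SimpleGraph (Fin n)}
    (h : EmbN τ φ G) (u : Fin n) : EmbN τ φ (extendTree G u) := by
  refine ⟨h.1, fun v => (h.2.1 v).trans (Nat.lt_succ_self n), fun a b => ?_⟩
  rw [adjN_ext, ← h.2.2 a b]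
  have := h.2.1 a
  have := h.2.1 b
  constructor
  · rintro (h | h | h)
    · exact h
    · omega
    · omega
  · exact Or.inl

/-- Every finite tree can be found, with positive probability, in a large enough tree grown from
`S`: its vertices are added one leaf at a time. -/
lemma exists_reach_emb {k : ℕ} (hk : 2 ≤ k) (S : SimpleGraph (Fin k)) : ∀ (r : ℕ) (V : Type)
    [Fintype V], Fintype.card V = r + 1 → ∀ τ : SimpleGraph V, τ.IsTree →
    ∃ (m : ℕ) (G : SimpleGraph (Fin (k + m))) (φ : V → ℕ), Reach S m G ∧ EmbN τ φ G := by
  classical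
  intro r
  induction r with
  | zero =>
    intro V _ hV τ _
    have hsub : Subsingleton V := Fintype.card_le_one_iff_subsingleton.1 hV.le
    refine ⟨0, S, fun _ => 0, rfl, fun a b _ => Subsingleton.elim a b,
      fun _ => by change 0 < k + 0; omega, fun a b => ?_⟩
    rw [Subsingleton.elim a b]
    constructor
    · rintro ⟨_, _, h⟩
      exact absurd h (SimpleGraph.irrefl _)
    · intro h
      exact absurd h (SimpleGraph.irrefl _)
  | succ r ih =>
    intro V _ hV τ hτ
    have : Nontrivial V := Fintype.one_lt_card_iff_nontrivial.1 (by omega)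
    obtain ⟨u, hu⟩ := hτ.exists_vert_degree_one_of_nontrivial
    obtain ⟨p, hp⟩ := (SimpleGraph.degree_eq_one_iff_existsUnique_adj).1 hu
    have hpu : p ≠ u := hp.1.ne'
    have hcard : Fintype.card ({u}ᶜ : Set V) = r + 1 := by
      rw [Fintype.card_compl_set]; simp [hV]
    obtain ⟨m, G, φ, hG, hφ⟩ := ih ({u}ᶜ : Set V) hcard (τ.induce {u}ᶜ)
      ⟨hτ.connected.induce_compl_singleton_of_degree_eq_one hu, hτ.isAcyclic.induce _⟩
    set q : Fin (k + m) := ⟨φ ⟨p, hpu⟩, hφ.2.1 _⟩ with hq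
    have hφ' := hφ.ext q
    let ψ : V → ℕ := fun x => if h : x ≠ u then φ ⟨x, h⟩ else k + m
    have hψ : ∀ x (h : x ≠ u), ψ x = φ ⟨x, h⟩ := fun x h => dif_pos h
    have hψu : ψ u = k + m := dif_neg (by simp)
    refine ⟨m + 1, extendTree G q, ψ, ⟨G, hG, q, rfl⟩, ?_, ?_, ?_⟩
    · intro a b hab
      by_cases ha : a = u <;> by_cases hb : b = u
      · rw [ha, hb]
      · rw [ha, hψu, hψ b hb] at hab
        have := hφ.2.1 ⟨b, hb⟩
        omega
      · rw [hb, hψu, hψ a ha] at hab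
        have := hφ.2.1 ⟨a, ha⟩
        omega
      · rw [hψ a ha, hψ b hb] at hab
        exact congrArg Subtype.val (hφ.1 hab)
    · intro a
      by_cases ha : a = u
      · rw [ha, hψu]; omega
      · rw [hψ a ha]; exact hφ'.2.1 _
    · have key : ∀ b (hb : b ≠ u), adjN (extendTree G q) (φ ⟨b, hb⟩) (k + m) ↔ τ.Adj b u := by
        intro b hb
        have h1 := hφ.2.1 ⟨b, hb⟩
        rw [adjN_ext]
        constructor
        · rintro (⟨_, h, _⟩ | ⟨h, _⟩ | ⟨h, _⟩)
          · omega
          · have h2 : (⟨b, hb⟩ : ({u}ᶜ : Set V)) = ⟨p, hpu⟩ := hφ.1 h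
            have h3 : b = p := congrArg Subtype.val h2
            rw [h3]
            exact hp.1.symm
          · omega
        · intro h
          have h3 : b = p := hp.2 b h.symm
          subst h3
          exact Or.inr (Or.inl ⟨rfl, rfl⟩)
      intro a b
      by_cases ha : a = u <;> by_cases hb : b = u
      · subst ha
        subst hb
        constructor
        · rintro ⟨_, _, h⟩
          exact absurd h (SimpleGraph.irrefl _)
        · intro h
          exact absurd h (SimpleGraph.irrefl _)
      · subst ha
        rw [hψu, hψ b hb, τ.adj_comm, ← key b hb]
        exact ⟨adjN.symm, adjN.symm⟩
      · subst hb
        rw [hψu, hψ a ha]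
        exact key a ha
      · rw [hψ a ha, hψ b hb, hφ'.2.2]
        rfl

/-- Attaching further vertices to an embedded copy makes all its degrees large. -/
lemma exists_reach_degrees {k : ℕ} {S : SimpleGraph (Fin k)} {V : Type} [Fintype V]
    {τ : SimpleGraph V} {φ : V → ℕ} (D : ℕ)
    (h : ∃ (m : ℕ) (G : SimpleGraph (Fin (k + m))), Reach S m G ∧ EmbN τ φ G) :
    ∃ (m : ℕ) (G : SimpleGraph (Fin (k + m))), Reach S m G ∧ EmbN τ φ G ∧
      ∀ u, D ≤ dgAt G (φ u) (k + m) := by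
  classical
  suffices H : ∀ s : Finset V, ∃ (m : ℕ) (G : SimpleGraph (Fin (k + m))), Reach S m G ∧
      EmbN τ φ G ∧ ∀ u ∈ s, D ≤ dgAt G (φ u) (k + m) by
    obtain ⟨m, G, h1, h2, h3⟩ := H Finset.univ
    exact ⟨m, G, h1, h2, fun u => h3 u (Finset.mem_univ u)⟩
  intro s
  induction s using Finset.induction_on with
  | empty =>
    obtain ⟨m, G, h1, h2⟩ := h
    exact ⟨m, G, h1, h2, by simp⟩
  | insert a s _ ih =>
    suffices H : ∀ q : ℕ, ∃ (m : ℕ) (G : SimpleGraph (Fin (k + m))), Reach S m G ∧ EmbN τ φ G ∧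
        (∀ u ∈ s, D ≤ dgAt G (φ u) (k + m)) ∧ q ≤ dgAt G (φ a) (k + m) by
      obtain ⟨m, G, h1, h2, h3, h4⟩ := H D
      exact ⟨m, G, h1, h2, by simpa using ⟨h4, h3⟩⟩
    intro q
    induction q with
    | zero =>
      obtain ⟨m, G, h1, h2, h3⟩ := ih
      exact ⟨m, G, h1, h2, h3, Nat.zero_le _⟩
    | succ q ihq =>
      obtain ⟨m, G, h1, h2, h3, h4⟩ := ihq
      have hdeg := fun v => dgAt_ext_succ G ⟨φ a, h2.2.1 a⟩ (h2.2.1 v)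
      refine ⟨m + 1, extendTree G ⟨φ a, h2.2.1 a⟩, ⟨G, h1, _, rfl⟩, h2.ext _, fun u hu => ?_, ?_⟩
      · have := hdeg u
        have := h3 u hu
        change D ≤ dgAt _ _ (k + m + 1)
        omega
      · have := hdeg a
        rw [if_pos rfl] at this
        change q + 1 ≤ dgAt _ _ (k + m + 1)
        omega

open Classical in
/-- The contribution to the observable of the single map `φ`, zero if `φ` is not an embedding. -/
def oneCopy {V : Type} [Fintype V] (τ : SimpleGraph V) (ℓ : V → ℕ) (φ : V → ℕ) {n : ℕ}
    (G : SimpleGraph (Fin n)) : ℝ :=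
  if EmbN τ φ G then ∏ u, ((dgAt G (φ u) n - 1).descFactorial (ℓ u) : ℝ) else 0

lemma oneCopy_nonneg {V : Type} [Fintype V] (τ : SimpleGraph V) (ℓ : V → ℕ) (φ : V → ℕ) {n : ℕ}
    (G : SimpleGraph (Fin n)) : 0 ≤ oneCopy τ ℓ φ G := by
  unfold oneCopy
  split_ifs
  · positivity
  · exact le_rfl

lemma oneCopy_le_obs (τ : DecTree) (φ : Fin τ.n → ℕ) {n : ℕ} (G : SimpleGraph (Fin n)) :
    oneCopy τ.tree τ.dec φ G ≤ τ.obs G := by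
  classical
  by_cases h : EmbN τ.tree φ G
  · have : Finite (τ.tree ↪g G) := Finite.of_injective (fun φ => (φ : Fin τ.n → Fin n))
      DFunLike.coe_injective
    have := Fintype.ofFinite (τ.tree ↪g G)
    let ψ : τ.tree ↪g G := ⟨⟨fun u => ⟨φ u, h.2.1 u⟩, fun a b hab => h.1 (Fin.ext_iff.1 hab)⟩, by
      intro a b
      rw [← h.2.2 a b]
      exact (adjN_val G ⟨φ a, h.2.1 a⟩ ⟨φ b, h.2.1 b⟩).symm⟩
    have e : oneCopy τ.tree τ.dec φ G = embWeight G τ.dec ψ := by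
      rw [oneCopy, if_pos h, embWeight]
      refine Finset.prod_congr rfl fun u _ => ?_
      rw [degR_eq_dgAt]
      rfl
    rw [e, DecTree.obs, obsG, finsum_eq_sum_of_fintype]
    exact Finset.single_le_sum (f := fun φ : τ.tree ↪g G => embWeight G τ.dec φ)
      (fun φ _ => embWeight_nonneg G τ.dec φ) (Finset.mem_univ ψ)
  · rw [oneCopy, if_neg h]
    exact obs_nonneg τ G

lemma descFactorial_drift {α : ℝ} (hα : 0 < α) (d l : ℕ) :
    (l : ℝ) * (d.descFactorial l : ℝ) ≤
      (d + α) * (((d + 1).descFactorial l : ℝ) - (d.descFactorial l : ℝ)) := by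
  cases l with
  | zero => simp
  | succ l =>
    rw [Nat.succ_descFactorial_succ, Nat.descFactorial_succ]
    have h0 : (0 : ℝ) ≤ (d.descFactorial l : ℝ) := Nat.cast_nonneg _
    rcases Nat.lt_or_ge d l with h | h
    · rw [Nat.descFactorial_eq_zero_iff_lt.2 h]; simp
    · push_cast [Nat.cast_sub h]
      have hl : (0 : ℝ) ≤ l := Nat.cast_nonneg _
      have : 0 ≤ ((l : ℝ) + 1) * ((α + l) * (d.descFactorial l : ℝ)) := by positivity
      nlinarith

section Lower

variable {α : ℝ} (hα : 0 < α) {k : ℕ} (hk : 2 ≤ k) {S : SimpleGraph (Fin k)} (hS : S.IsTree)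

include hα hk hS in
/-- One attachment step multiplies the expected contribution of a fixed copy by at least
`1 + |ℓ| / ((1 + α) n - 2)`. -/
lemma oneCopy_step {V : Type} [Fintype V] (τ : SimpleGraph V) (ℓ : V → ℕ) (φ : V → ℕ) {m : ℕ}
    {G : SimpleGraph (Fin (k + m))} (hG : Reach S m G) :
    (1 + ((∑ v, ℓ v : ℕ) : ℝ) / ((1 + α) * ((k + m : ℕ) : ℝ) - 2)) * oneCopy τ ℓ φ G ≤
      ∑ u, wt α G u * oneCopy τ ℓ φ (extendTree G u) := by
  classical
  by_cases h : EmbN τ φ G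
  swap
  · rw [oneCopy, if_neg h, mul_zero]
    exact Finset.sum_nonneg fun u _ => mul_nonneg (le_max_right _ _) (oneCopy_nonneg _ _ _ _)
  have hN := norm_pos hα hk m
  set N := (1 + α) * ((k + m : ℕ) : ℝ) - 2 with hNdef
  set d : V → ℕ := fun v => dgAt G (φ v) (k + m) - 1 with hd
  have hd1 : ∀ v, dgAt G (φ v) (k + m) = d v + 1 := fun v => by
    have := reach_degree_pos hk hS m G hG (φ v) (h.2.1 v)
    simp only [hd]; omega
  set P : ℝ := ∏ v, ((d v).descFactorial (ℓ v) : ℝ) with hP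
  set R : V → ℝ := fun v => ∏ w ∈ Finset.univ.erase v, ((d w).descFactorial (ℓ w) : ℝ) with hR
  have hPR : ∀ v, P = ((d v).descFactorial (ℓ v) : ℝ) * R v := fun v =>
    (Finset.mul_prod_erase _ _ (Finset.mem_univ v)).symm
  have hR0 : ∀ v, 0 ≤ R v := fun v => Finset.prod_nonneg fun _ _ => Nat.cast_nonneg _
  have e0 : oneCopy τ ℓ φ G = P := by rw [oneCopy, if_pos h]
  -- the gain of the product when the new vertex is attached to `φ v`
  set g : V → ℝ := fun v =>
    (((d v + 1).descFactorial (ℓ v) : ℝ) - ((d v).descFactorial (ℓ v) : ℝ)) * R v with hg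
  have e1 : ∀ u : Fin (k + m), oneCopy τ ℓ φ (extendTree G u) =
      P + ∑ v, if u = ⟨φ v, h.2.1 v⟩ then g v else 0 := by
    intro u
    rw [oneCopy, if_pos (h.ext u)]
    have hdeg := fun v => dgAt_ext_succ G u (h.2.1 v)
    by_cases hu : ∃ v, φ v = u
    · obtain ⟨v, hv⟩ := hu
      have hne : ∀ w, w ≠ v → φ w ≠ u := fun w hw e => hw (h.1 (e.trans hv.symm))
      rw [Finset.sum_eq_single v (fun w _ hw => if_neg fun e => hne w hw (by rw [e]))
        (fun hc => absurd (Finset.mem_univ v) hc), if_pos (Fin.ext hv.symm), hPR v, hg,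
        ← Finset.mul_prod_erase _ _ (Finset.mem_univ v)]
      have e2 : ∏ x ∈ Finset.univ.erase v,
          ((dgAt (extendTree G u) (φ x) (k + m + 1) - 1).descFactorial (ℓ x) : ℝ) = R v := by
        refine Finset.prod_congr rfl fun w hw => ?_
        rw [hdeg, if_neg (hne w (Finset.ne_of_mem_erase hw))]
        rfl
      rw [e2, hdeg, if_pos hv, hd1, Nat.add_sub_cancel]
      ring
    · rw [Finset.sum_eq_zero (fun w _ => if_neg fun e => hu ⟨w, by rw [e]⟩), add_zero]
      refine Finset.prod_congr rfl fun w _ => ?_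
      rw [hdeg, if_neg fun e => hu ⟨w, e⟩]
      rfl
  have e3 : ∑ u, wt α G u * oneCopy τ ℓ φ (extendTree G u) =
      P + ∑ v, wt α G ⟨φ v, h.2.1 v⟩ * g v := by
    simp only [e1, mul_add, Finset.mul_sum, mul_ite, mul_zero]
    rw [Finset.sum_add_distrib, ← Finset.sum_mul, wt_sum hα hk hS hG, one_mul, Finset.sum_comm]
    congr 1
    refine Finset.sum_congr rfl fun v _ => ?_
    rw [Finset.sum_ite_eq' Finset.univ (⟨φ v, h.2.1 v⟩ : Fin (k + m)) fun u => wt α G u * g v,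
      if_pos (Finset.mem_univ _)]
  rw [e3, e0, one_add_mul, Nat.cast_sum, Finset.sum_div, Finset.sum_mul]
  refine add_le_add_right (Finset.sum_le_sum fun v _ => ?_) P
  rw [wt_eq hα hk hS hG, hd1, hPR v, hg, div_mul_eq_mul_div, div_mul_eq_mul_div]
  refine div_le_div_of_nonneg_right ?_ hN.le
  have h1 := mul_le_mul_of_nonneg_right (descFactorial_drift hα (d v) (ℓ v)) (hR0 v)
  push_cast
  nlinarith

/-- The sequence `h i = (i - 2γ + a) ^ a`, where `γ = 1 / (1 + α)` and `a = γ L`, grows no faster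
than the product of the factors `1 + L / ((1 + α) i - 2)`. -/
lemma growth_step (hα : 0 < α) {i L : ℝ} (hi : 2 ≤ i) (hL : 0 ≤ L) :
    (i + 1 - 2 / (1 + α) + L / (1 + α)) ^ (L / (1 + α)) ≤
      (1 + L / ((1 + α) * i - 2)) * (i - 2 / (1 + α) + L / (1 + α)) ^ (L / (1 + α)) := by
  have h1 : 0 < 1 + α := by linarith
  set a := L / (1 + α) with ha
  have ha0 : 0 ≤ a := by positivity
  have hy : 0 < i - 2 / (1 + α) := by
    rw [sub_pos, div_lt_iff₀ h1]; nlinarith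
  set y := i - 2 / (1 + α) with hydef
  have hLN : L / ((1 + α) * i - 2) = a / y := by
    have : (1 + α) * i - 2 = (1 + α) * y := by rw [hydef]; field_simp
    rw [this, ha, div_div]
  have hx : 0 < y + a := by linarith
  have e : i + 1 - 2 / (1 + α) + a = (1 + (y + a)⁻¹) * (y + a) := by
    rw [add_mul, inv_mul_cancel₀ hx.ne', hydef]; ring
  rw [e, hLN, Real.mul_rpow (by positivity) hx.le]
  refine mul_le_mul_of_nonneg_right ?_ (by positivity)
  calc (1 + (y + a)⁻¹) ^ a ≤ (Real.exp (y + a)⁻¹) ^ a := by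
        refine Real.rpow_le_rpow (by positivity) ?_ ha0
        rw [add_comm]; exact Real.add_one_le_exp _
    _ = Real.exp (a / (y + a)) := by
        rw [← Real.exp_mul, inv_mul_eq_div]
    _ = (Real.exp (-(a / (y + a))))⁻¹ := by rw [Real.exp_neg, inv_inv]
    _ ≤ (-(a / (y + a)) + 1)⁻¹ := by
        refine inv_anti₀ ?_ (Real.add_one_le_exp _)
        have : a / (y + a) < 1 := by rw [div_lt_one hx]; linarith
        linarith
    _ = 1 + a / y := by
        have : -(a / (y + a)) + 1 = y / (y + a) := by field_simp; ring
        rw [this, inv_div]; field_simp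

include hα hk hS in
lemma lower_bound (τ : DecTree) (hτ : τ.tree.IsTree) (hL : 2 ≤ τ.decSum) :
    ∃ c : ℝ, 0 < c ∧ ∃ m₀ : ℕ, ∀ m, m₀ ≤ m →
      c * ((k + m : ℕ) : ℝ) ^ (2 * (τ.decSum : ℝ) / (1 + α)) ≤
        ex α S m (fun G => τ.obs G ^ 2) := by
  have h1α : 0 < 1 + α := by linarith
  have : Nonempty (Fin τ.n) := hτ.connected.nonempty
  have hn : 0 < τ.n := Fin.pos_iff_nonempty.2 this
  obtain ⟨m₁, G₁, φ, hG₁, hφ₁⟩ := exists_reach_emb hk S (τ.n - 1) (Fin τ.n)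
    (by rw [Fintype.card_fin]; omega) τ.tree hτ
  obtain ⟨m₀, G₀, hG₀, hφ₀, hdeg⟩ := exists_reach_degrees (τ.decSum + 1) ⟨m₁, G₁, hG₁, hφ₁⟩
  have hpos : 0 < ex α S m₀ (oneCopy τ.tree τ.dec φ) := by
    refine ex_pos_of_reach hα hk hS m₀ _ (fun G _ => oneCopy_nonneg _ _ _ _) G₀ hG₀ ?_
    rw [oneCopy, if_pos hφ₀]
    refine Finset.prod_pos fun u _ => ?_
    have h1 : τ.dec u ≤ τ.decSum :=
      Finset.single_le_sum (f := τ.dec) (fun _ _ => Nat.zero_le _) (Finset.mem_univ u)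
    have h2 := hdeg u
    have h3 : 0 < (dgAt G₀ (φ u) (k + m₀) - 1).descFactorial (τ.dec u) := by
      rw [Nat.pos_iff_ne_zero, Ne, Nat.descFactorial_eq_zero_iff_lt]
      omega
    exact_mod_cast h3
  set L : ℝ := (τ.decSum : ℝ) with hLdef
  have hL2 : (2 : ℝ) ≤ L := by rw [hLdef]; exact_mod_cast hL
  set a := L / (1 + α) with ha
  have ha0 : 0 ≤ a := by positivity
  have h2a : 2 / (1 + α) ≤ a := by rw [ha]; gcongr
  set H : ℕ → ℝ := fun i => ((i : ℝ) - 2 / (1 + α) + a) ^ a with hH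
  have hHpos : ∀ i : ℕ, 2 ≤ i → 0 < H i := fun i hi => by
    have : (2 : ℝ) ≤ i := by exact_mod_cast hi
    exact Real.rpow_pos_of_pos (by linarith) _
  set c := ex α S m₀ (oneCopy τ.tree τ.dec φ) / H (k + m₀) with hc
  have hc0 : 0 < c := div_pos hpos (hHpos _ (by omega))
  have key : ∀ m, m₀ ≤ m → c * H (k + m) ≤ ex α S m (oneCopy τ.tree τ.dec φ) := by
    intro m hm
    induction m, hm using Nat.le_induction with
    | base => rw [hc, div_mul_cancel₀ _ (hHpos _ (by omega)).ne']
    | succ m hm ih =>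
      have hN := norm_pos hα hk m
      have g1 := growth_step hα (i := ((k + m : ℕ) : ℝ)) (L := L)
        (by exact_mod_cast (by omega : 2 ≤ k + m)) (by linarith)
      have g2 : H (k + (m + 1)) ≤ (1 + L / ((1 + α) * ((k + m : ℕ) : ℝ) - 2)) * H (k + m) := by
        refine le_trans (le_of_eq ?_) g1
        simp only [hH]
        push_cast
        congr 1
        ring
      calc c * H (k + (m + 1))
          ≤ c * ((1 + L / ((1 + α) * ((k + m : ℕ) : ℝ) - 2)) * H (k + m)) :=
            mul_le_mul_of_nonneg_left g2 hc0.le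
        _ = (1 + L / ((1 + α) * ((k + m : ℕ) : ℝ) - 2)) * (c * H (k + m)) := by ring
        _ ≤ (1 + L / ((1 + α) * ((k + m : ℕ) : ℝ) - 2)) * ex α S m (oneCopy τ.tree τ.dec φ) :=
            mul_le_mul_of_nonneg_left ih (by positivity)
        _ = ex α S m (fun G => (1 + L / ((1 + α) * ((k + m : ℕ) : ℝ) - 2)) *
              oneCopy τ.tree τ.dec φ G) := (ex_smul α S m _ _).symm
        _ ≤ ex α S (m + 1) (oneCopy τ.tree τ.dec φ) :=
            ex_mono α S m _ _ fun G hG => oneCopy_step hα hk hS τ.tree τ.dec φ hG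
  refine ⟨c ^ 2, by positivity, m₀, fun m hm => ?_⟩
  have h1 : c * ((k + m : ℕ) : ℝ) ^ a ≤ ex α S m τ.obs :=
    calc c * ((k + m : ℕ) : ℝ) ^ a ≤ c * H (k + m) := by
          refine mul_le_mul_of_nonneg_left ?_ hc0.le
          exact Real.rpow_le_rpow (by positivity) (by linarith) ha0
      _ ≤ _ := key m hm
      _ ≤ _ := ex_mono α S m _ _ fun G _ => oneCopy_le_obs τ φ G
  calc c ^ 2 * ((k + m : ℕ) : ℝ) ^ (2 * L / (1 + α)) = (c * ((k + m : ℕ) : ℝ) ^ a) ^ 2 := by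
        rw [mul_pow, ← Real.rpow_mul_natCast (by positivity)]
        congr 2
        rw [ha]; push_cast; ring
    _ ≤ (ex α S m τ.obs) ^ 2 := pow_le_pow_left₀ (by positivity) h1 2
    _ ≤ _ := ex_sq hα hk hS m _

end Lower

/-! ### Conclusion -/

/-- **Theorem 3.1.** If all decorations of `τ` are `≥ 2` and `|ℓ| > 1+α`,
then for every seed of size `k ≥ 2`, `E[F_τ(T_n^S)²] ≈ n^{2|ℓ|/(1+α)}`. -/
theorem second_moment_asymptotics (α : ℝ) (hα : 0 < α) (τ : DecTree) (hτ : τ.tree.IsTree)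
    (hdec : ∀ u, 2 ≤ τ.dec u) (hsum : 1 + α < (τ.decSum : ℝ))
    (k : ℕ) (hk : 2 ≤ k) (S : SimpleGraph (Fin k)) (hS : S.IsTree) :
    asympEquiv (fun m => ∫ G, (τ.obs G) ^ 2 ∂paLaw α S m)
      (fun m => ((k + m : ℕ) : ℝ) ^ (2 * (τ.decSum : ℝ) / (1 + α))) := by
  have hd : 2 ≤ τ.decSum := by
    have : Nonempty (Fin τ.n) := hτ.connected.nonempty
    obtain ⟨u⟩ := this
    exact (hdec u).trans
      (Finset.single_le_sum (f := τ.dec) (fun _ _ => Nat.zero_le _) (Finset.mem_univ u))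
  obtain ⟨C, hC⟩ := upper_bound hα τ hτ hdec hsum hk hS
  obtain ⟨c, hc, m₀, hlow⟩ := lower_bound hα hk hS τ hτ hd
  have e : ∀ m, ∫ G, (τ.obs G) ^ 2 ∂paLaw α S m = ex α S m (fun G => τ.obs G ^ 2) := fun m =>
    integral_paLaw α S m _ fun G => sq_nonneg _
  refine ⟨max C c⁻¹, lt_max_of_lt_right (inv_pos.2 hc), ?_⟩
  filter_upwards [eventually_ge_atTop m₀] with m hm
  have h1 := hC m
  have h2 := hlow m hm
  rw [e]
  set X : ℝ := ((k + m : ℕ) : ℝ) ^ (2 * (τ.decSum : ℝ) / (1 + α)) with hX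
  have hX0 : 0 ≤ X := by positivity
  have hE0 : 0 ≤ ex α S m (fun G => τ.obs G ^ 2) := ex_nonneg α S m _ fun G _ => sq_nonneg _
  constructor
  · exact h1.trans (mul_le_mul_of_nonneg_right (le_max_left _ _) hX0)
  · refine le_trans ?_ (mul_le_mul_of_nonneg_right (le_max_right C c⁻¹) hE0)
    rw [inv_mul_eq_div, le_div_iff₀ hc]
    linarith

end AffinePA
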